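/- arXiv:0712.0731 — 3 statements merged into one kernel-verified Lean document; each statement's English description precedes it below -/
import Mathlib

section
/- Let Ω be a C¹ bounded domain satisfying the interior sphere condition, let F satisfy (F1), (F2), (F3), let b and c be bounded and continuous on Ω, and let f : ∂Ω × ℝ → ℝ satisfy f(x,0) ≥ 0 for all x ∈ ∂Ω. If u ∈ USC(Ω̄) is a non-positive viscosity subsolution of F(x,Du,D²u) + b(x)·Du|Du|^α + c(x)|u|^α u = 0 in Ω with boundary condition f(x,u) + ⟨Du, n(x)⟩ = 0 on ∂Ω, then either u ≡ 0 in Ω̄ or u < 0 in Ω̄. -/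
open Filter Set Metric
open scoped RealInnerProductSpace Topology NNReal

noncomputable section

/-- Euclidean space `ℝ^N`. -/
abbrev EN (N : ℕ) := EuclideanSpace ℝ (Fin N)

/-- The space of `N × N` real matrices. -/
abbrev Mat (N : ℕ) := Matrix (Fin N) (Fin N) ℝ

/-- Operator (spectral) norm of a matrix, viewed as a linear map on Euclidean space. -/
noncomputable def matNorm {N : ℕ} (X : Mat N) : ℝ :=
  ‖LinearMap.toContinuousLinearMap (Matrix.toEuclideanLin X)‖

/-- The Hessian matrix of `φ : ℝ^N → ℝ` at `x`. -/
noncomputable def hess {N : ℕ} (φ : EN N → ℝ) (x : EN N) : Mat N :=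
  Matrix.of fun i j =>
    iteratedFDeriv ℝ 2 φ x ![EuclideanSpace.single i 1, EuclideanSpace.single j 1]

/-- `ρ` is a `C²` defining function for the domain `Ω` with exterior unit normal `nv`. -/
def IsC2DefiningFun {N : ℕ} (Ω : Set (EN N)) (nv : EN N → EN N) (ρ : EN N → ℝ) : Prop :=
  ContDiff ℝ 2 ρ ∧ Ω = {x | ρ x < 0} ∧ frontier Ω = {x | ρ x = 0} ∧
    ∀ x ∈ frontier Ω, gradient ρ x ≠ 0 ∧ nv x = ‖gradient ρ x‖⁻¹ • gradient ρ x

/-- `Ω` is a bounded domain of class `C²` with exterior unit normal `nv` on `∂Ω`. -/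
def IsC2Domain {N : ℕ} (Ω : Set (EN N)) (nv : EN N → EN N) : Prop :=
  IsOpen Ω ∧ IsConnected Ω ∧ Bornology.IsBounded Ω ∧ ∃ ρ : EN N → ℝ, IsC2DefiningFun Ω nv ρ

/-- `Ω` is a bounded domain of class `C¹` with exterior unit normal `nv` on `∂Ω`. -/
def IsC1Domain {N : ℕ} (Ω : Set (EN N)) (nv : EN N → EN N) : Prop :=
  IsOpen Ω ∧ IsConnected Ω ∧ Bornology.IsBounded Ω ∧
    ∃ ρ : EN N → ℝ, ContDiff ℝ 1 ρ ∧ Ω = {x | ρ x < 0} ∧ frontier Ω = {x | ρ x = 0} ∧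
      ∀ x ∈ frontier Ω, gradient ρ x ≠ 0 ∧ nv x = ‖gradient ρ x‖⁻¹ • gradient ρ x

/-- Interior sphere condition (Ω1). -/
def InteriorSphereCond {N : ℕ} (Ω : Set (EN N)) : Prop :=
  ∀ x ∈ frontier Ω, ∃ R > (0 : ℝ), ∃ y ∈ Ω, ‖x - y‖ = R ∧ Metric.ball y R ⊆ Ω

/-- (F1): homogeneity of `F`. -/
def CondF1 {N : ℕ} (Ω : Set (EN N)) (α : ℝ) (F : EN N → EN N → Mat N → ℝ) : Prop :=
  ∀ x ∈ closure Ω, ∀ t : ℝ, t ≠ 0 → ∀ μ : ℝ, 0 ≤ μ → ∀ p : EN N, p ≠ 0 → ∀ X : Mat N,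
    X.IsSymm → F x (t • p) (μ • X) = |t| ^ α * μ * F x p X

/-- (F2): uniform ellipticity of `F` with ellipticity constants `0 < a ≤ A`. -/
def CondF2 {N : ℕ} (Ω : Set (EN N)) (α a A : ℝ) (F : EN N → EN N → Mat N → ℝ) : Prop :=
  0 < a ∧ a ≤ A ∧ ∀ x ∈ closure Ω, ∀ p : EN N, p ≠ 0 → ∀ M P : Mat N, M.IsSymm →
    P.PosSemidef →
      a * ‖p‖ ^ α * P.trace ≤ F x p (M + P) - F x p M ∧
      F x p (M + P) - F x p M ≤ A * ‖p‖ ^ α * P.trace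

/-- (F3): Hölder continuity of `F` in the `x` variable. -/
def CondF3 {N : ℕ} (Ω : Set (EN N)) (α C₁ θ : ℝ) (F : EN N → EN N → Mat N → ℝ) : Prop :=
  0 < C₁ ∧ θ ∈ Set.Ioc (1/2 : ℝ) 1 ∧ ∀ x ∈ closure Ω, ∀ y ∈ closure Ω, ∀ p : EN N, p ≠ 0 →
    ∀ X : Mat N, X.IsSymm → |F x p X - F y p X| ≤ C₁ * ‖x - y‖ ^ θ * ‖p‖ ^ α * matNorm X

/-- (F4): Hölder continuity of `F` in the gradient variable. -/
def CondF4 {N : ℕ} (Ω : Set (EN N)) (α C₂ ν : ℝ) (F : EN N → EN N → Mat N → ℝ) : Prop :=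
  0 < C₂ ∧ ν ∈ Set.Ioc (1/2 : ℝ) 1 ∧ ∀ x ∈ closure Ω, ∀ p : EN N, p ≠ 0 → ∀ q : EN N,
    ‖q‖ ≤ ‖p‖ / 2 → ∀ X : Mat N, X.IsSymm →
      |F x (p + q) X - F x p X| ≤ C₂ * ‖p‖ ^ (α - ν) * ‖q‖ ^ ν * matNorm X

/-- The Neumann boundary operator `B(x,r,p) = ⟨p, n(x)⟩`. -/
def BNeu {N : ℕ} (nv : EN N → EN N) : EN N → ℝ → EN N → ℝ := fun x _ p => ⟪p, nv x⟫

/-- Viscosity subsolution of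
`F(x,Du,D²u) + b(x)·Du |Du|^α + c₀(x, u) = g(x)` in `Ω`, `B(x,u,Du) = 0` on `∂Ω`. -/
def IsSubSol {N : ℕ} (Ω : Set (EN N)) (F : EN N → EN N → Mat N → ℝ) (b : EN N → EN N)
    (α : ℝ) (c₀ : EN N → ℝ → ℝ) (g : EN N → ℝ) (B : EN N → ℝ → EN N → ℝ)
    (u : EN N → ℝ) : Prop :=
  (∀ x₀ ∈ Ω, ∀ φ : EN N → ℝ, ContDiff ℝ 2 φ →
      IsLocalMaxOn (fun x => u x - φ x) (closure Ω) x₀ → gradient φ x₀ ≠ 0 →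
      g x₀ ≤ F x₀ (gradient φ x₀) (hess φ x₀)
        + ⟪b x₀, gradient φ x₀⟫ * ‖gradient φ x₀‖ ^ α + c₀ x₀ (u x₀)) ∧
  (∀ x₀ ∈ Ω, ∀ k : ℝ, (∀ᶠ x in nhdsWithin x₀ (closure Ω), u x = k) → g x₀ ≤ c₀ x₀ k) ∧
  (∀ x₀ ∈ frontier Ω, ∀ φ : EN N → ℝ, ContDiff ℝ 2 φ →
      IsLocalMaxOn (fun x => u x - φ x) (closure Ω) x₀ → gradient φ x₀ ≠ 0 →
      min (g x₀ - (F x₀ (gradient φ x₀) (hess φ x₀)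
          + ⟪b x₀, gradient φ x₀⟫ * ‖gradient φ x₀‖ ^ α + c₀ x₀ (u x₀)))
        (B x₀ (u x₀) (gradient φ x₀)) ≤ 0) ∧
  (∀ x₀ ∈ frontier Ω, ∀ k : ℝ, (∀ᶠ x in nhdsWithin x₀ (closure Ω), u x = k) →
      min (g x₀ - c₀ x₀ k) (B x₀ k 0) ≤ 0)

/-- Viscosity supersolution of
`F(x,Dv,D²v) + b(x)·Dv |Dv|^α + c₀(x, v) = g(x)` in `Ω`, `B(x,v,Dv) = 0` on `∂Ω`. -/
def IsSuperSol {N : ℕ} (Ω : Set (EN N)) (F : EN N → EN N → Mat N → ℝ) (b : EN N → EN N)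
    (α : ℝ) (c₀ : EN N → ℝ → ℝ) (g : EN N → ℝ) (B : EN N → ℝ → EN N → ℝ)
    (v : EN N → ℝ) : Prop :=
  (∀ x₀ ∈ Ω, ∀ φ : EN N → ℝ, ContDiff ℝ 2 φ →
      IsLocalMinOn (fun x => v x - φ x) (closure Ω) x₀ → gradient φ x₀ ≠ 0 →
      F x₀ (gradient φ x₀) (hess φ x₀)
        + ⟪b x₀, gradient φ x₀⟫ * ‖gradient φ x₀‖ ^ α + c₀ x₀ (v x₀) ≤ g x₀) ∧
  (∀ x₀ ∈ Ω, ∀ k : ℝ, (∀ᶠ x in nhdsWithin x₀ (closure Ω), v x = k) → c₀ x₀ k ≤ g x₀) ∧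
  (∀ x₀ ∈ frontier Ω, ∀ φ : EN N → ℝ, ContDiff ℝ 2 φ →
      IsLocalMinOn (fun x => v x - φ x) (closure Ω) x₀ → gradient φ x₀ ≠ 0 →
      0 ≤ max (g x₀ - (F x₀ (gradient φ x₀) (hess φ x₀)
          + ⟪b x₀, gradient φ x₀⟫ * ‖gradient φ x₀‖ ^ α + c₀ x₀ (v x₀)))
        (B x₀ (v x₀) (gradient φ x₀))) ∧
  (∀ x₀ ∈ frontier Ω, ∀ k : ℝ, (∀ᶠ x in nhdsWithin x₀ (closure Ω), v x = k) →
      0 ≤ max (g x₀ - c₀ x₀ k) (B x₀ k 0))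

/-- The admissible set for the principal eigenvalue `λ̄`:
all `λ` such that there is a bounded positive supersolution of
`G(x,v,Dv,D²v) + λ v^{α+1} ≤ 0` in `Ω`, `⟨Dv, n⟩ ≥ 0` on `∂Ω`. -/
def lamBarSet {N : ℕ} (Ω : Set (EN N)) (nv : EN N → EN N) (F : EN N → EN N → Mat N → ℝ)
    (b : EN N → EN N) (c : EN N → ℝ) (α : ℝ) : Set ℝ :=
  {lam | ∃ v : EN N → ℝ, LowerSemicontinuousOn v (closure Ω) ∧
    (∀ x ∈ closure Ω, 0 < v x) ∧ (∃ M, ∀ x ∈ closure Ω, v x ≤ M) ∧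
    IsSuperSol Ω F b α (fun x r => (c x + lam) * |r| ^ α * r) (fun _ => 0) (BNeu nv) v}

/-- The admissible set for the principal eigenvalue `λ̲`:
all `λ` such that there is a bounded negative subsolution of
`G(x,u,Du,D²u) + λ |u|^α u ≥ 0` in `Ω`, `⟨Du, n⟩ ≤ 0` on `∂Ω`. -/
def lamLowSet {N : ℕ} (Ω : Set (EN N)) (nv : EN N → EN N) (F : EN N → EN N → Mat N → ℝ)
    (b : EN N → EN N) (c : EN N → ℝ) (α : ℝ) : Set ℝ :=
  {lam | ∃ u : EN N → ℝ, UpperSemicontinuousOn u (closure Ω) ∧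
    (∀ x ∈ closure Ω, u x < 0) ∧ (∃ M, ∀ x ∈ closure Ω, M ≤ u x) ∧
    IsSubSol Ω F b α (fun x r => (c x + lam) * |r| ^ α * r) (fun _ => 0) (BNeu nv) u}

/-!
Let `E = ε e^{-k|x-y|²}`. For `k` large the barrier `w = ε (e^{-kR²} - e^{-k|x-y|²})` is a strict
supersolution on the annulus `R/2 ≤ |x-y| ≤ R`: with `q = |Dw|^α · 2kE`, the second-order part
contributes at most `q (A N - 2ak|x-y|²)`, the drift at most `q ‖b‖ |x-y|`, and, wherever
`-E ≤ u ≤ 0`, the zero-order term is `O(E^{1+α}) = O(q |x-y|)`. If `u < 0` in the ball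
`B(y,R) ⊆ Ω` and `ε` is small, then `u ≤ w` for `|x-y| ≤ R/2`. At an interior maximum of `u - w`
in the annulus with `u > w ≥ -E`, `w` would be a test function contradicting the equation. Hence
`u ≤ w` in the ball, and outside it `u ≤ 0 ≤ w`, so `w` touches `u` from above at every zero `x₀`
of `u` on the sphere.

At `x₀ ∈ Ω` this contradicts the equation; if `u` is neither zero nor negative in `Ω`,
connectedness provides such a ball. At `x₀ ∈ ∂Ω` both alternatives of the boundary condition fail:
`Dw(x₀)` is a positive multiple of `x₀ - y`, which has positive normal component because a defining
function of `Ω` is maximal over the closed interior ball at `x₀`. Finally, `u ≡ 0` in `Ω` extends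
to `Ω̄` by upper semicontinuity.
-/

section Topology

lemma le_of_forall_isLocalMax_le {X : Type*} [TopologicalSpace X] {K V : Set X} {w : X → ℝ} {m : ℝ}
    (hK : IsCompact K) (hV : IsOpen V) (hVK : V ⊆ K) (hw : UpperSemicontinuousOn w K)
    (hKV : ∀ x ∈ K \ V, w x ≤ m) (hmax : ∀ x ∈ V, IsLocalMax w x → w x ≤ m) :
    ∀ x ∈ K, w x ≤ m := by
  intro x hx
  obtain ⟨z, hzK, hz⟩ := hw.exists_isMaxOn ⟨x, hx⟩ hK
  refine (hz hx).trans ?_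
  by_cases hzV : z ∈ V
  · exact hmax z hzV (hz.isLocalMax (mem_of_superset (hV.mem_nhds hzV) hVK))
  · exact hKV z ⟨hzK, hzV⟩

lemma exists_pos_forall_le_neg {X : Type*} [TopologicalSpace X] {K : Set X} {u : X → ℝ}
    (hK : IsCompact K) (hu : UpperSemicontinuousOn u K) (hneg : ∀ x ∈ K, u x < 0) :
    ∃ ε > 0, ∀ x ∈ K, u x ≤ -ε := by
  rcases K.eq_empty_or_nonempty with rfl | hne
  · exact ⟨1, one_pos, by simp⟩
  · obtain ⟨z, hzK, hz⟩ := hu.exists_isMaxOn hne hK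
    exact ⟨-u z, neg_pos.2 (hneg z hzK), fun x hx => by simpa using hz hx⟩

lemma le_on_closure_of_upperSemicontinuousOn {X : Type*} [TopologicalSpace X] {s : Set X}
    {u : X → ℝ} {m : ℝ} (hu : UpperSemicontinuousOn u (closure s)) (hm : ∀ x ∈ s, m ≤ u x) :
    ∀ x ∈ closure s, m ≤ u x := by
  obtain ⟨v, hv, hsv⟩ := upperSemicontinuousOn_iff_preimage_Ici.1 hu m
  have hs : s ⊆ v := fun x hx => (hsv.subset ⟨subset_closure hx, hm x hx⟩).2
  exact fun x hx => (hsv.superset ⟨hx, closure_minimal hs hv hx⟩).2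

lemma exists_ball_subset_dist_mem_diff {X : Type*} [PseudoMetricSpace X] [ProperSpace X]
    {Ω U : Set X} (hΩ : IsOpen Ω) (hc : IsPreconnected Ω) (hU : IsOpen U)
    (hΩU : (Ω ∩ U).Nonempty) (hdiff : (Ω \ U).Nonempty) :
    ∃ y ∈ U, ∃ x ∈ Ω \ U, ball y (dist x y) ⊆ U := by
  obtain ⟨z, ⟨hzU, hzΩ⟩, hzU'⟩ : ∃ z ∈ closure U ∩ Ω, z ∉ U := by
    by_contra! hcon
    exact sdiff_nonempty.1 hdiff (hc.subset_of_closure_inter_subset hU hΩU hcon)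
  obtain ⟨r, hr, hrΩ⟩ := Metric.isOpen_iff.1 hΩ z hzΩ
  obtain ⟨y, hyU, hyz⟩ := Metric.mem_closure_iff.1 hzU (r / 2) (half_pos hr)
  obtain ⟨x, hxU, hx⟩ := hU.isClosed_compl.exists_infDist_eq_dist ⟨z, hzU'⟩ y
  have hxy : dist y x ≤ dist y z := hx ▸ infDist_le_dist_of_mem hzU'
  have hxz : dist x z < r := by
    linarith [dist_triangle x y z, dist_comm x y, dist_comm y z]
  refine ⟨y, hyU, x, ⟨hrΩ hxz, hxU⟩, ?_⟩
  rw [dist_comm, ← hx]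
  exact ball_infDist_compl_subset

end Topology

section Gradient

variable {E : Type*} [NormedAddCommGroup E] [InnerProductSpace ℝ E] [CompleteSpace E]

lemma norm_mul_norm_gradient_le_inner_of_isMaxOn_closedBall {ρ : E → ℝ} {g x y : E}
    (hρ : HasGradientAt ρ g x) (hmax : IsMaxOn ρ (closedBall y ‖x - y‖) x) :
    ‖x - y‖ * ‖g‖ ≤ ⟪x - y, g⟫ := by
  rcases eq_or_ne g 0 with rfl | hg
  · simp
  have hg' : ‖g‖ ≠ 0 := norm_ne_zero_iff.2 hg
  set z := y + (‖x - y‖ / ‖g‖) • g with hz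
  have hzB : z ∈ closedBall y ‖x - y‖ := by
    simp [hz, norm_smul, div_mul_cancel₀ _ hg']
  have hcone : z - x ∈ posTangentConeAt (closedBall y ‖x - y‖) x :=
    sub_mem_posTangentConeAt_of_segment_subset
      ((convex_closedBall _ _).segment_subset (by simp [dist_eq_norm]) hzB)
  have hle : ⟪g, z - x⟫ ≤ 0 := by
    simpa using hmax.localize.hasFDerivWithinAt_nonpos hρ.hasFDerivAt.hasFDerivWithinAt hcone
  have hinner : ⟪g, z - x⟫ = ‖x - y‖ * ‖g‖ - ⟪x - y, g⟫ := by
    have : z - x = (‖x - y‖ / ‖g‖) • g - (x - y) := by rw [hz]; abel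
    rw [this, inner_sub_right, inner_smul_right, real_inner_self_eq_norm_sq,
      real_inner_comm g (x - y)]
    field_simp
  linarith

lemma hess_apply_of_hasGradientAt {N : ℕ} {φ : EN N → ℝ} {G : EN N → EN N} {G' : EN N →L[ℝ] EN N}
    {x : EN N} (hφ : ∀ z, HasGradientAt φ (G z) z) (hG : HasFDerivAt G G' x) (i j : Fin N) :
    hess φ x i j = G' (EuclideanSpace.single i 1) j := by
  have hfderiv : fderiv ℝ φ = fun z => innerSL ℝ (G z) :=
    funext fun z => (hφ z).hasFDerivAt.fderiv
  have hfderiv₂ : HasFDerivAt (fderiv ℝ φ) ((innerSL ℝ : EN N →L[ℝ] _).comp G') x := by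
    rw [hfderiv]
    exact (innerSL ℝ : EN N →L[ℝ] _).hasFDerivAt.comp x hG
  simp [hess, iteratedFDeriv_two_apply, hfderiv₂.fderiv, EuclideanSpace.inner_single_right]

end Gradient

section Barrier

variable {E : Type*} [SeminormedAddCommGroup E] {y x : E} {R k ε : ℝ}

/-- The Gaussian `ε e^{-k|x-y|²}` centred at `y`. It is the non-constant part of `hopfBarrier` and
the scale against which its derivatives are measured. -/
def gaussianBump (y : E) (k ε : ℝ) (x : E) : ℝ :=
  ε * Real.exp (-k * ‖x - y‖ ^ 2)

/-- The barrier of Hopf's lemma, `ε (e^{-kR²} - e^{-k|x-y|²})`. It vanishes on the sphere of radius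
`R` about `y` and, for `k, ε > 0`, increases with the distance to `y`. -/
def hopfBarrier (y : E) (R k ε : ℝ) (x : E) : ℝ :=
  ε * Real.exp (-k * R ^ 2) - gaussianBump y k ε x

lemma gaussianBump_pos (hε : 0 < ε) : 0 < gaussianBump y k ε x :=
  mul_pos hε (Real.exp_pos _)

lemma gaussianBump_le (hk : 0 ≤ k) (hε : 0 ≤ ε) : gaussianBump y k ε x ≤ ε :=
  mul_le_of_le_one_right hε (Real.exp_le_one_iff.2 (by
    rw [neg_mul]; exact neg_nonpos.2 (by positivity)))

lemma neg_gaussianBump_le_hopfBarrier (hε : 0 ≤ ε) :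
    -gaussianBump y k ε x ≤ hopfBarrier y R k ε x := by
  have : 0 ≤ ε * Real.exp (-k * R ^ 2) := by positivity
  simp only [hopfBarrier]
  linarith

lemma hopfBarrier_norm_sub : hopfBarrier y ‖x - y‖ k ε x = 0 :=
  sub_self _

lemma hopfBarrier_nonneg (hR : 0 ≤ R) (hk : 0 ≤ k) (hε : 0 ≤ ε) (hx : R ≤ ‖x - y‖) :
    0 ≤ hopfBarrier y R k ε x := by
  have hsq : R ^ 2 ≤ ‖x - y‖ ^ 2 := by gcongr
  refine sub_nonneg.2 (mul_le_mul_of_nonneg_left (Real.exp_le_exp.2 ?_) hε)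
  nlinarith

end Barrier

section BarrierDerivatives

variable {E : Type*} [NormedAddCommGroup E] [InnerProductSpace ℝ E] {y x : E} {R k ε : ℝ}

lemma contDiff_hopfBarrier {n : WithTop ℕ∞} : ContDiff ℝ n (hopfBarrier y R k ε) :=
  contDiff_const.sub (contDiff_const.mul
    (contDiff_const.mul ((contDiff_id.sub contDiff_const).norm_sq ℝ)).exp)

lemma hasFDerivAt_gaussianBump :
    HasFDerivAt (gaussianBump y k ε) (-(2 * k * gaussianBump y k ε x) • innerSL ℝ (x - y)) x := by
  have hsub : HasFDerivAt (fun z => z - y) (.id ℝ E) x := (hasFDerivAt_id x).sub_const y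
  refine ((hsub.norm_sq.const_mul (-k)).exp.const_mul ε).congr_fderiv
    (ContinuousLinearMap.ext fun v => ?_)
  simp only [neg_mul, map_sub, ContinuousLinearMap.comp_id, neg_smul, smul_neg, neg_apply,
    smul_apply, sub_apply, coe_innerSL_apply, nsmul_eq_mul, Nat.cast_ofNat, smul_eq_mul,
    gaussianBump, neg_inj]
  ring

lemma hasGradientAt_hopfBarrier [CompleteSpace E] :
    HasGradientAt (hopfBarrier y R k ε) ((2 * k * gaussianBump y k ε x) • (x - y)) x := by
  rw [hasGradientAt_iff_hasFDerivAt]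
  refine (hasFDerivAt_gaussianBump.const_sub _).congr_fderiv (ContinuousLinearMap.ext fun v => ?_)
  simp

lemma gradient_hopfBarrier [CompleteSpace E] :
    gradient (hopfBarrier y R k ε) x = (2 * k * gaussianBump y k ε x) • (x - y) :=
  hasGradientAt_hopfBarrier.gradient

lemma norm_gradient_hopfBarrier [CompleteSpace E] (hk : 0 ≤ k) (hε : 0 < ε) :
    ‖gradient (hopfBarrier y R k ε) x‖ = 2 * k * ‖x - y‖ * gaussianBump y k ε x := by
  have := gaussianBump_pos (y := y) (k := k) (x := x) hε
  rw [gradient_hopfBarrier, norm_smul, Real.norm_of_nonneg (by positivity)]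
  ring

lemma hess_hopfBarrier {N : ℕ} {x y : EN N} :
    hess (hopfBarrier y R k ε) x =
      (2 * k * gaussianBump y k ε x) • (1 : Mat N) -
        (4 * k ^ 2 * gaussianBump y k ε x) • Matrix.vecMulVec (x - y).ofLp (star (x - y).ofLp) := by
  have hsub : HasFDerivAt (fun z => z - y) (.id ℝ (EN N)) x := (hasFDerivAt_id x).sub_const y
  ext i j
  rw [hess_apply_of_hasGradientAt (fun _ => hasGradientAt_hopfBarrier)
    ((hasFDerivAt_gaussianBump.const_mul (2 * k)).smul hsub)]
  simp only [map_sub, neg_smul, smul_neg, add_apply, smul_apply, neg_apply, sub_apply,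
    ContinuousLinearMap.id_apply, ContinuousLinearMap.smulRight_apply, coe_innerSL_apply,
    EuclideanSpace.inner_single_right, Real.ringHom_apply, one_mul, mul_one, mul_zero, mul_ite,
    smul_eq_mul, star_trivial, eq_comm, PiLp.add_apply, PiLp.smul_apply, PiLp.single_apply,
    PiLp.neg_apply, PiLp.sub_apply, WithLp.ofLp_sub, Pi.sub_apply, Matrix.sub_apply,
    Matrix.smul_apply, Matrix.one_apply, Matrix.vecMulVec_apply]
  ring

end BarrierDerivatives

section EllipticOperator

variable {N : ℕ} {Ω : Set (EN N)} {α a A : ℝ} {F : EN N → EN N → Mat N → ℝ} {b : EN N → EN N}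

/-- Domination of `F` by the Pucci extremal operator with weight `|p|^α`. The decomposition
`X = P - Q` into positive semidefinite parts is arbitrary, which avoids naming `X⁺` and `X⁻`. -/
def IsPucciDominated (Ω : Set (EN N)) (α a A : ℝ) (F : EN N → EN N → Mat N → ℝ) : Prop :=
  ∀ x ∈ closure Ω, ∀ p ≠ 0, ∀ P Q : Mat N, P.PosSemidef → Q.PosSemidef →
    F x p (P - Q) ≤ ‖p‖ ^ α * (A * P.trace - a * Q.trace)

lemma CondF1.apply_zero (hF : CondF1 Ω α F) {x p : EN N} (hx : x ∈ closure Ω) (hp : p ≠ 0) :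
    F x p 0 = 0 := by
  simpa using hF x hx 1 one_ne_zero 0 le_rfl p hp 0 Matrix.isSymm_zero

lemma CondF2.isPucciDominated (hF : CondF2 Ω α a A F)
    (hF0 : ∀ x ∈ closure Ω, ∀ p ≠ 0, F x p 0 = 0) : IsPucciDominated Ω α a A F := by
  intro x hx p hp P Q hP hQ
  have hsymm {M : Mat N} (hM : M.PosSemidef) : M.IsSymm := hM.isHermitian
  have hQ_le := (hF.2.2 x hx p hp (P - Q) Q ((hsymm hP).sub (hsymm hQ)) hQ).1
  have hP_le := (hF.2.2 x hx p hp 0 P Matrix.isSymm_zero hP).2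
  rw [sub_add_cancel] at hQ_le
  rw [zero_add, hF0 x hx p hp] at hP_le
  linarith

lemma trace_vecMulVec_star_self (v : EN N) :
    (Matrix.vecMulVec v.ofLp (star v.ofLp)).trace = ‖v‖ ^ 2 := by
  rw [Matrix.trace_vecMulVec, EuclideanSpace.norm_sq_eq]
  simp [dotProduct, ← sq]

/-- The operator `F(x,Dφ,D²φ) + b(x)·Dφ|Dφ|^α` applied to `φ`, without its zero-order term. -/
def ellipticOp (F : EN N → EN N → Mat N → ℝ) (b : EN N → EN N) (α : ℝ) (φ : EN N → ℝ)
    (x : EN N) : ℝ :=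
  F x (gradient φ x) (hess φ x) + ⟪b x, gradient φ x⟫ * ‖gradient φ x‖ ^ α

lemma gradient_hopfBarrier_ne_zero {x y : EN N} {R k ε : ℝ} (hk : 0 < k) (hε : 0 < ε)
    (hx : x ≠ y) : gradient (hopfBarrier y R k ε) x ≠ 0 := by
  have := gaussianBump_pos (y := y) (k := k) (x := x) hε
  rw [gradient_hopfBarrier]
  exact smul_ne_zero (by positivity) (sub_ne_zero.2 hx)

lemma ellipticOp_hopfBarrier_le (hF : IsPucciDominated Ω α a A F) {x y : EN N} {R k ε B : ℝ}
    (hx : x ∈ closure Ω) (hxy : x ≠ y) (hk : 0 < k) (hε : 0 < ε) (hb : ‖b x‖ ≤ B) :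
    ellipticOp F b α (hopfBarrier y R k ε) x ≤
      ‖gradient (hopfBarrier y R k ε) x‖ ^ α * (2 * k * gaussianBump y k ε x) *
        (A * N + B * ‖x - y‖ - 2 * a * k * ‖x - y‖ ^ 2) := by
  have hbump := gaussianBump_pos (y := y) (k := k) (x := x) hε
  have hsecond := hF x hx _ (gradient_hopfBarrier_ne_zero (R := R) hk hε hxy) _ _
    (Matrix.PosSemidef.one.smul (show 0 ≤ 2 * k * gaussianBump y k ε x by positivity))
    ((Matrix.posSemidef_vecMulVec_self_star (x - y).ofLp).smul
      (show 0 ≤ 4 * k ^ 2 * gaussianBump y k ε x by positivity))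
  rw [← hess_hopfBarrier (R := R), Matrix.trace_smul, Matrix.trace_one, Fintype.card_fin,
    Matrix.trace_smul, trace_vecMulVec_star_self, smul_eq_mul, smul_eq_mul] at hsecond
  have hinner : ⟪b x, gradient (hopfBarrier y R k ε) x⟫ ≤
      B * (2 * k * ‖x - y‖ * gaussianBump y k ε x) := by
    rw [← norm_gradient_hopfBarrier (R := R) hk.le hε]
    exact (real_inner_le_norm _ _).trans (mul_le_mul_of_nonneg_right hb (norm_nonneg _))
  have hfirst := mul_le_mul_of_nonneg_right hinner
    (Real.rpow_nonneg (norm_nonneg (gradient (hopfBarrier y R k ε) x)) α)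
  rw [ellipticOp]
  linarith

lemma gaussianBump_rpow_le (hα : -1 < α) {x y : EN N} {R k ε : ℝ} (hk : 0 < k) (hε : 0 < ε)
    (hxy : 1 ≤ 2 * k * ‖x - y‖) :
    gaussianBump y k ε x ^ (1 + α) ≤
      ‖gradient (hopfBarrier y R k ε) x‖ ^ α * (2 * k * gaussianBump y k ε x) * ‖x - y‖ := by
  have hbump := gaussianBump_pos (y := y) (k := k) (x := x) hε
  have hnorm := norm_gradient_hopfBarrier (y := y) (R := R) (x := x) hk.le hε
  have hle : gaussianBump y k ε x ≤ ‖gradient (hopfBarrier y R k ε) x‖ :=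
    hnorm ▸ le_mul_of_one_le_left hbump.le hxy
  calc gaussianBump y k ε x ^ (1 + α)
      ≤ ‖gradient (hopfBarrier y R k ε) x‖ ^ (1 + α) :=
        Real.rpow_le_rpow hbump.le hle (by linarith)
    _ = ‖gradient (hopfBarrier y R k ε) x‖ ^ α * ‖gradient (hopfBarrier y R k ε) x‖ := by
        rw [add_comm, Real.rpow_add_one (hbump.trans_le hle).ne']
    _ = ‖gradient (hopfBarrier y R k ε) x‖ ^ α * (2 * k * ‖x - y‖ * gaussianBump y k ε x) :=
        congrArg _ hnorm
    _ = _ := by ring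

lemma exists_ellipticOp_hopfBarrier_lt (hα : -1 < α) (ha : 0 < a)
    (hF : IsPucciDominated Ω α a A F) (y : EN N) {R : ℝ} (hR : 0 < R) (B : ℝ) {C : ℝ}
    (hC : 0 ≤ C) :
    ∃ k > 0, ∀ ε > 0, ∀ x ∈ closure Ω, ‖b x‖ ≤ B → R / 2 ≤ ‖x - y‖ → ‖x - y‖ ≤ R →
      ellipticOp F b α (hopfBarrier y R k ε) x < -(C * gaussianBump y k ε x ^ (1 + α)) := by
  have hlarge : ∀ᶠ k : ℝ in atTop,
      0 < k ∧ 1 ≤ k * R ∧ A * N + (|B| + C) * R < k * (a * R ^ 2 / 2) :=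
    (eventually_gt_atTop 0).and <|
      ((tendsto_id.atTop_mul_const hR).eventually_ge_atTop 1).and
        ((tendsto_id.atTop_mul_const (by positivity)).eventually_gt_atTop _)
  obtain ⟨k, hk, hkR, hkBC⟩ := hlarge.exists
  refine ⟨k, hk, fun ε hε x hx hb hRx hxR => ?_⟩
  have hxy : x ≠ y := by
    rintro rfl
    simp only [sub_self, norm_zero] at hRx
    linarith
  have hfactor : A * N + B * ‖x - y‖ - 2 * a * k * ‖x - y‖ ^ 2 + C * ‖x - y‖ < 0 := by
    have hsq : 2 * a * k * (R / 2) ^ 2 ≤ 2 * a * k * ‖x - y‖ ^ 2 := by gcongr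
    have hlin : (B + C) * ‖x - y‖ ≤ (|B| + C) * R := by
      gcongr
      exact le_abs_self B
    linarith
  have hop := ellipticOp_hopfBarrier_le (R := R) hF hx hxy hk hε hb
  have hzero := mul_le_mul_of_nonneg_left
    (gaussianBump_rpow_le hα (R := R) (x := x) (y := y) hk hε (by nlinarith)) hC
  have hgrad := norm_pos_iff.2 (gradient_hopfBarrier_ne_zero (R := R) hk hε hxy)
  have hbump := gaussianBump_pos (y := y) (k := k) (x := x) hε
  have hneg := mul_neg_of_pos_of_neg (show 0 < ‖gradient (hopfBarrier y R k ε) x‖ ^ α *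
    (2 * k * gaussianBump y k ε x) by positivity) hfactor
  linarith

end EllipticOperator

section StrongMaximumPrinciple

variable {N : ℕ} {Ω : Set (EN N)} {α a A : ℝ} {F : EN N → EN N → Mat N → ℝ} {b : EN N → EN N}
  {c u : EN N → ℝ}

/-- The test functions of the viscosity theory: `φ` is `C²`, touches `u` from above at `x₀`
relative to `Ω̄` (up to a constant), and is not critical there. -/
structure IsTestFun (Ω : Set (EN N)) (u φ : EN N → ℝ) (x₀ : EN N) : Prop where
  contDiff : ContDiff ℝ 2 φ
  isLocalMaxOn : IsLocalMaxOn (fun x => u x - φ x) (closure Ω) x₀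
  gradient_ne_zero : gradient φ x₀ ≠ 0

/-- The conditions on `F(x,Du,D²u) + b(x)·Du|Du|^α + c(x)|u|^α u` under which Hopf's barrier
argument works. -/
structure IsHopfOperator (Ω : Set (EN N)) (α a A : ℝ) (F : EN N → EN N → Mat N → ℝ)
    (b : EN N → EN N) (c : EN N → ℝ) : Prop where
  neg_one_lt : -1 < α
  ellipticity_pos : 0 < a
  isPucciDominated : IsPucciDominated Ω α a A F
  exists_norm_le : ∃ B, ∀ x ∈ Ω, ‖b x‖ ≤ B
  exists_neg_le : ∃ C, ∀ x ∈ Ω, -C ≤ c x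

/-- `u` is a non-positive viscosity subsolution of
`F(x,Du,D²u) + b(x)·Du|Du|^α + c(x)|u|^α u = 0` in `Ω`. Only noncritical test functions are
used, and nothing is required on `∂Ω` beyond semicontinuity and sign. -/
structure IsNonposSubSol (Ω : Set (EN N)) (F : EN N → EN N → Mat N → ℝ) (b : EN N → EN N)
    (α : ℝ) (c u : EN N → ℝ) : Prop where
  upperSemicontinuousOn : UpperSemicontinuousOn u (closure Ω)
  nonpos : ∀ x ∈ closure Ω, u x ≤ 0
  nonneg_of_isTestFun : ∀ x ∈ Ω, ∀ φ, IsTestFun Ω u φ x →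
    0 ≤ ellipticOp F b α φ x + c x * |u x| ^ α * u x

lemma mul_abs_rpow_mul_le (hα : -1 < α) {C E γ r : ℝ} (hC : 0 ≤ C) (hγ : -C ≤ γ) (hr : r ≤ 0)
    (hE : -E ≤ r) : γ * |r| ^ α * r ≤ C * E ^ (1 + α) := by
  rcases hr.eq_or_lt with rfl | hr
  · simpa using mul_nonneg hC (Real.rpow_nonneg (by linarith) _)
  calc γ * |r| ^ α * r = -γ * (-r) ^ (1 + α) := by
        rw [abs_of_neg hr, add_comm, Real.rpow_add_one (neg_pos.2 hr).ne']
        ring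
    _ ≤ C * (-r) ^ (1 + α) := by
        gcongr
        · exact Real.rpow_nonneg (neg_pos.2 hr).le _
        · linarith
    _ ≤ C * E ^ (1 + α) := by
        gcongr <;> linarith

lemma IsNonposSubSol.le_hopfBarrier_of_isLocalMax (hu : IsNonposSubSol Ω F b α c u) (hα : -1 < α)
    {C : ℝ} (hC : 0 ≤ C) {x y : EN N} {R k ε : ℝ} (hk : 0 < k) (hε : 0 < ε) (hx : x ∈ Ω)
    (hc : -C ≤ c x) (hxy : x ≠ y)
    (hstrict : ellipticOp F b α (hopfBarrier y R k ε) x < -(C * gaussianBump y k ε x ^ (1 + α)))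
    (hmax : IsLocalMax (fun z => u z - hopfBarrier y R k ε z) x) :
    u x ≤ hopfBarrier y R k ε x := by
  by_contra! hlt
  have htest := hu.nonneg_of_isTestFun x hx _
    ⟨contDiff_hopfBarrier, hmax.on _, gradient_hopfBarrier_ne_zero hk hε hxy⟩
  have hbelow : -gaussianBump y k ε x ≤ u x :=
    (neg_gaussianBump_le_hopfBarrier hε.le).trans hlt.le
  have hzero := mul_abs_rpow_mul_le hα hC hc (hu.nonpos x (subset_closure hx)) hbelow
  linarith

lemma IsNonposSubSol.le_hopfBarrier (hu : IsNonposSubSol Ω F b α c u) (hα : -1 < α) {C : ℝ}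
    (hC : 0 ≤ C) (hc : ∀ x ∈ Ω, -C ≤ c x) {y : EN N} {R k ε : ℝ} (hR : 0 < R) (hk : 0 < k)
    (hε : 0 < ε) (hball : ball y R ⊆ Ω) (hinner : ∀ x ∈ closedBall y (R / 2), u x ≤ -ε)
    (hstrict : ∀ x ∈ Ω, R / 2 ≤ ‖x - y‖ → ‖x - y‖ ≤ R →
      ellipticOp F b α (hopfBarrier y R k ε) x < -(C * gaussianBump y k ε x ^ (1 + α))) :
    ∀ x ∈ closure Ω, u x ≤ hopfBarrier y R k ε x := by
  have houter {x : EN N} (hx : x ∈ closure Ω) (hRx : R ≤ ‖x - y‖) : u x ≤ hopfBarrier y R k ε x :=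
    (hu.nonpos x hx).trans (hopfBarrier_nonneg hR.le hk.le hε.le hRx)
  have hcball : closedBall y R ⊆ closure Ω := closure_ball y hR.ne' ▸ closure_mono hball
  have hcontDiff : ContDiff ℝ 2 (hopfBarrier y R k ε) := contDiff_hopfBarrier
  have husc : UpperSemicontinuousOn (fun x => u x - hopfBarrier y R k ε x) (closedBall y R) := by
    simp only [sub_eq_add_neg]
    exact (hu.upperSemicontinuousOn.mono hcball).add
      (hcontDiff.continuous.neg.upperSemicontinuous.upperSemicontinuousOn _)
  have hcomparison : ∀ x ∈ closedBall y R, u x - hopfBarrier y R k ε x ≤ 0 := by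
    refine le_of_forall_isLocalMax_le (V := ball y R \ closedBall y (R / 2))
      (isCompact_closedBall y R) (isOpen_ball.sdiff isClosed_closedBall)
      (sdiff_subset.trans ball_subset_closedBall) husc ?_ ?_
    · rintro x ⟨hxR, hxV⟩
      rw [sub_nonpos]
      by_cases hx : x ∈ closedBall y (R / 2)
      · linarith [hinner x hx, gaussianBump_le (y := y) (x := x) hk.le hε.le,
          neg_gaussianBump_le_hopfBarrier (y := y) (R := R) (k := k) (x := x) hε.le]
      · exact houter (hcball hxR) (not_lt.1 fun h => hxV ⟨mem_ball_iff_norm.2 h, hx⟩)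
    · rintro x ⟨hxR, hxR'⟩ hmax
      have hxΩ := hball hxR
      rw [mem_ball_iff_norm] at hxR
      rw [mem_closedBall_iff_norm, not_le] at hxR'
      have hxy : x ≠ y := sub_ne_zero.1 (norm_pos_iff.1 ((half_pos hR).trans hxR'))
      exact sub_nonpos.2 (hu.le_hopfBarrier_of_isLocalMax hα hC hk hε hxΩ (hc x hxΩ) hxy
        (hstrict x hxΩ hxR'.le hxR.le) hmax)
  intro x hx
  rcases le_total ‖x - y‖ R with h | h
  · exact sub_nonpos.1 (hcomparison x (mem_closedBall_iff_norm.2 h))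
  · exact houter hx h

/-- Hopf's lemma in viscosity form: the barrier itself is the test function. -/
lemma IsNonposSubSol.exists_isTestFun_ellipticOp_neg (hu : IsNonposSubSol Ω F b α c u)
    (hL : IsHopfOperator Ω α a A F b c) {x₀ y : EN N} (hxy : x₀ ≠ y)
    (hball : ball y ‖x₀ - y‖ ⊆ Ω ∩ {x | u x < 0}) (hux₀ : u x₀ = 0) :
    ∃ φ, IsTestFun Ω u φ x₀ ∧ (∃ t > (0 : ℝ), gradient φ x₀ = t • (x₀ - y)) ∧
      ellipticOp F b α φ x₀ < 0 := by
  obtain ⟨B, hB⟩ := hL.exists_norm_le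
  obtain ⟨C, hC⟩ := hL.exists_neg_le
  set R := ‖x₀ - y‖ with hR
  have hRpos : 0 < R := norm_pos_iff.2 (sub_ne_zero.2 hxy)
  obtain ⟨hballΩ, hneg⟩ := subset_inter_iff.1 hball
  have hx₀ : x₀ ∈ closure Ω := closure_mono hballΩ
    (closure_ball y hRpos.ne' ▸ mem_closedBall_iff_norm.2 le_rfl)
  obtain ⟨k, hk, hstrict⟩ := exists_ellipticOp_hopfBarrier_lt (b := b) hL.neg_one_lt
    hL.ellipticity_pos hL.isPucciDominated y hRpos (max B ‖b x₀‖) (abs_nonneg C)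
  have hhalf : closedBall y (R / 2) ⊆ ball y R := closedBall_subset_ball (half_lt_self hRpos)
  obtain ⟨ε, hε, hinner⟩ := exists_pos_forall_le_neg (isCompact_closedBall y (R / 2))
    (hu.upperSemicontinuousOn.mono ((hhalf.trans hballΩ).trans subset_closure))
    fun x hx => hneg (hhalf hx)
  have hle := hu.le_hopfBarrier hL.neg_one_lt (abs_nonneg C)
    (fun x hx => (neg_le_neg (le_abs_self C)).trans (hC x hx)) hRpos hk hε hballΩ hinner
    fun x hx => hstrict ε hε x (subset_closure hx) ((hB x hx).trans (le_max_left _ _))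
  have hbump := gaussianBump_pos (y := y) (k := k) (x := x₀) hε
  refine ⟨hopfBarrier y R k ε, ⟨contDiff_hopfBarrier, ?_, gradient_hopfBarrier_ne_zero hk hε hxy⟩,
    ⟨_, by positivity, gradient_hopfBarrier⟩, ?_⟩
  · filter_upwards [self_mem_nhdsWithin] with x hx
    rw [hux₀, hR, hopfBarrier_norm_sub, sub_zero, sub_nonpos]
    exact hle x hx
  · refine (hstrict ε hε x₀ hx₀ (le_max_right _ _) (half_le_self hRpos.le) le_rfl).trans_le ?_
    exact neg_nonpos.2 (by positivity)

lemma IsNonposSubSol.eq_zero_or_neg (hu : IsNonposSubSol Ω F b α c u)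
    (hL : IsHopfOperator Ω α a A F b c) (hΩo : IsOpen Ω) (hΩc : IsPreconnected Ω) :
    (∀ x ∈ Ω, u x = 0) ∨ ∀ x ∈ Ω, u x < 0 := by
  obtain ⟨U, hU, hΩU⟩ := upperSemicontinuousOn_iff_preimage_Iio.1
    (hu.upperSemicontinuousOn.mono subset_closure) 0
  have hmem {x : EN N} (hx : x ∈ Ω) : x ∈ U ↔ u x < 0 := by
    simpa [hx] using (Set.ext_iff.1 hΩU x).symm
  have hzero {x : EN N} (hx : x ∈ Ω) (hxU : x ∉ U) : u x = 0 :=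
    (hu.nonpos x (subset_closure hx)).eq_of_not_lt fun h => hxU ((hmem hx).2 h)
  by_contra! hcon
  obtain ⟨⟨v, hv, huv⟩, w, hw, huw⟩ := hcon
  have hvU : v ∈ Ω ∩ U := ⟨hv, by_contra fun h => huv (hzero hv h)⟩
  have hwU : w ∈ Ω \ U := ⟨hw, fun h => ((hmem hw).1 h).not_ge huw⟩
  obtain ⟨y, hyU, x₀, ⟨hx₀, hx₀U⟩, hball⟩ := exists_ball_subset_dist_mem_diff hΩo hΩc
    (hΩo.inter hU) ⟨v, hv, hvU⟩ ⟨w, hw, fun h => hwU.2 h.2⟩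
  have hux₀ := hzero hx₀ fun h => hx₀U ⟨hx₀, h⟩
  obtain ⟨φ, hφ, -, hneg⟩ := hu.exists_isTestFun_ellipticOp_neg hL
    (ne_of_mem_of_not_mem hyU hx₀U).symm
    (dist_eq_norm x₀ y ▸ hball.trans hΩU.superset) hux₀
  have := hu.nonneg_of_isTestFun x₀ hx₀ φ hφ
  rw [hux₀, mul_zero, add_zero] at this
  linarith

/-- The disjunction in `hbd` is the relaxed boundary condition `min {-L φ, f + ⟨Dφ, nv⟩} ≤ 0`, and
`nv` is a general oblique field, pointing strictly out of an interior ball. -/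
theorem stmt5_general {nv : EN N → EN N} {f : EN N → ℝ → ℝ} (hΩo : IsOpen Ω)
    (hΩc : IsPreconnected Ω)
    (hnv : ∀ x ∈ frontier Ω, ∃ y, ball y ‖x - y‖ ⊆ Ω ∧ 0 < ⟪x - y, nv x⟫)
    (hL : IsHopfOperator Ω α a A F b c) (hf : ∀ x ∈ frontier Ω, 0 ≤ f x 0)
    (hu : IsNonposSubSol Ω F b α c u)
    (hbd : ∀ x ∈ frontier Ω, ∀ φ, IsTestFun Ω u φ x →
      0 ≤ ellipticOp F b α φ x + c x * |u x| ^ α * u x ∨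
        f x (u x) + ⟪gradient φ x, nv x⟫ ≤ 0) :
    (∀ x ∈ closure Ω, u x = 0) ∨ ∀ x ∈ closure Ω, u x < 0 := by
  refine (hu.eq_zero_or_neg hL hΩo hΩc).imp (fun hzero x hx => ?_) fun hneg x hx => ?_
  · exact (hu.nonpos x hx).antisymm <| le_on_closure_of_upperSemicontinuousOn
      hu.upperSemicontinuousOn (fun z hz => (hzero z hz).ge) x hx
  · by_contra hux
    have hux : u x = 0 := (hu.nonpos x hx).eq_of_not_lt hux
    have hxfr : x ∈ frontier Ω := hΩo.frontier_eq ▸ ⟨hx, fun h => (hneg x h).ne hux⟩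
    obtain ⟨y, hball, hpos⟩ := hnv x hxfr
    have hxy : x ≠ y := by
      rintro rfl
      simp at hpos
    obtain ⟨φ, hφ, ⟨t, ht, hgrad⟩, hlt⟩ := hu.exists_isTestFun_ellipticOp_neg hL hxy
      (subset_inter hball fun z hz => hneg z (hball hz)) hux
    have := hf x hxfr
    have : 0 < t * ⟪x - y, nv x⟫ := mul_pos ht hpos
    have := hbd x hxfr φ hφ
    rw [hux, mul_zero, add_zero, hgrad, real_inner_smul_left] at this
    rcases this with h | h <;> linarith

end StrongMaximumPrinciple

lemma IsC1Domain.exists_ball_subset_inner_pos {N : ℕ} {Ω : Set (EN N)} {nv : EN N → EN N}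
    (hΩ : IsC1Domain Ω nv) (hsp : InteriorSphereCond Ω) {x : EN N} (hx : x ∈ frontier Ω) :
    ∃ y, ball y ‖x - y‖ ⊆ Ω ∧ 0 < ⟪x - y, nv x⟫ := by
  obtain ⟨-, -, -, ρ, hρ, hΩρ, hfrρ, hnv⟩ := hΩ
  obtain ⟨_, hR, y, -, rfl, hball⟩ := hsp x hx
  obtain ⟨hgrad, hnvx⟩ := hnv x hx
  have hρle : ∀ z ∈ closure Ω, ρ z ≤ 0 := by
    rw [closure_eq_self_union_frontier, hfrρ, hΩρ]
    rintro z (hz | hz)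
    exacts [hz.le, hz.le]
  have hmax : IsMaxOn ρ (closedBall y ‖x - y‖) x := fun z hz => by
    have hρx : ρ x = 0 := hfrρ.subset hx
    rw [← closure_ball y hR.ne'] at hz
    exact (hρle z (closure_mono hball hz)).trans_eq hρx.symm
  have hinner := norm_mul_norm_gradient_le_inner_of_isMaxOn_closedBall
    (hρ.differentiable one_ne_zero x).hasGradientAt hmax
  have hgradpos := norm_pos_iff.2 hgrad
  refine ⟨y, hball, ?_⟩
  rw [hnvx, real_inner_smul_right]
  exact mul_pos (inv_pos.2 hgradpos) ((mul_pos hR hgradpos).trans_le hinner)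

/-- Proposition `p2`: strong maximum principle. A non-positive subsolution
of the boundary value problem with `f(x,0) ≥ 0` is either identically zero or negative on `Ω̄`. -/
theorem stmt5 {N : ℕ} (Ω : Set (EN N)) (nv : EN N → EN N)
    (hΩ : IsC1Domain Ω nv) (hsp : InteriorSphereCond Ω)
    (α a A C₁ θ : ℝ) (hα : -1 < α)
    (F : EN N → EN N → Mat N → ℝ)
    (hF1 : CondF1 Ω α F) (hF2 : CondF2 Ω α a A F) (hF3 : CondF3 Ω α C₁ θ F)
    (b : EN N → EN N) (c : EN N → ℝ)
    (hbc : ContinuousOn b Ω) (hb : ∃ M, ∀ x ∈ Ω, ‖b x‖ ≤ M)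
    (hcc : ContinuousOn c Ω) (hcb : ∃ M, ∀ x ∈ Ω, |c x| ≤ M)
    (f : EN N → ℝ → ℝ) (hf : ∀ x ∈ frontier Ω, 0 ≤ f x 0)
    (u : EN N → ℝ) (husc : UpperSemicontinuousOn u (closure Ω))
    (hu0 : ∀ x ∈ closure Ω, u x ≤ 0)
    (hsub : IsSubSol Ω F b α (fun x r => c x * |r| ^ α * r) (fun _ => 0)
      (fun x r p => f x r + ⟪p, nv x⟫) u) :
    (∀ x ∈ closure Ω, u x = 0) ∨ (∀ x ∈ closure Ω, u x < 0) :=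
  stmt5_general hΩ.1 hΩ.2.1.isPreconnected (fun _ => hΩ.exists_ball_subset_inner_pos hsp)
    ⟨hα, hF2.1, hF2.isPucciDominated fun _ hx _ => hF1.apply_zero hx, hb,
      hcb.imp fun _ h x hx => (abs_le.1 (h x hx)).1⟩ hf
    ⟨husc, hu0, fun x hx φ hφ => hsub.1 x hx φ hφ.1 hφ.2 hφ.3⟩
    fun x hx φ hφ => (min_le_iff.1 (hsub.2.2.1 x hx φ hφ.1 hφ.2 hφ.3)).imp_left sub_nonpos.1
end
end

section
/- Let v ∈ LSC(Ω̄) be a viscosity supersolution of F(x,Dv,D²v) + b(x)·Dv|Dv|^α − β(v(x)) = g(x) in Ω with the Neumann condition ⟨Dv,n⟩ = 0 on ∂Ω, where g, β ∈ USC(Ω̄). Suppose x̄ ∈ Ω̄ is a strict local minimum of x ↦ v(x) + C|x − x̄|^q e^{−k d(x)}, where C > 0, k > q/(2r) with r the radius in the uniform exterior sphere condition, and q > max{2, (α+2)/(α+1)}. Suppose moreover that v is not locally constant around x̄. Then −β(v(x̄)) ≤ g(x̄). -/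
/-!
Move the pole of the penalization: for `z` close to `xb`, let `y z` minimize
`v + C |· - z| ^ q e ^ (-k d)` near `xb`. Strictness of the minimum at `xb` forces `y z → xb` and
`v (y z) → v xb`. If no better point than `z` itself existed for any `z` near `xb`, then
`v z ≤ v x + c |x - z| ^ q` for all `x`, `z` near `xb`; since `q > 1`, `v` would have zero
derivative along segments and be constant near `xb`, which is excluded. So `y z ≠ z` for some `z`
arbitrarily close to `xb`. Away from its pole the penalization is `C²` with nonzero gradient, and it
provides a test function for `v` at `y z`.

If `y z` is on the boundary, the factor `e ^ (-k d)` makes the gradient of this test function point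
strictly inwards: its normal component is at most a positive multiple of `q / (2 r) - k`, where
`q / (2 r)` bounds the contribution of `|· - z| ^ q` by the exterior sphere condition. Adding a
large multiple of `⟨n, · - y z⟩ ^ 2` then contradicts both alternatives of the boundary condition.
So `y z` is interior, and the equation gives
`-β (v (y z)) ≤ g (y z) + O (|y z - z| ^ ((q - 1) (α + 1) - 1))`. The exponent is positive because
`q > (α + 2) / (α + 1)`, and semicontinuity allows `z → xb`.
-/

open Filter Set Metric
open scoped RealInnerProductSpace Topology NNReal

noncomputable section

section ProximalSubgradient

variable {E : Type*} [NormedAddCommGroup E] [InnerProductSpace ℝ E]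

lemma abs_neg_inner_add_mul_norm_sq_le (p u : E) (σ : ℝ) :
    |-⟪p, u⟫ + σ * ‖u‖ ^ 2| ≤ (‖p‖ + |σ| * ‖u‖) * ‖u‖ := by
  calc |-⟪p, u⟫ + σ * ‖u‖ ^ 2| ≤ |⟪p, u⟫| + |σ| * ‖u‖ ^ 2 := by
        refine (abs_add_le _ _).trans_eq ?_
        rw [abs_neg, abs_mul, abs_of_nonneg (sq_nonneg ‖u‖)]
    _ ≤ ‖p‖ * ‖u‖ + |σ| * ‖u‖ ^ 2 := by gcongr; exact abs_real_inner_le_norm _ _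
    _ = _ := by ring

/-- `p` is a proximal subgradient of `f` at `y` relative to `s`: on `s`, near `y`, the concave
paraboloid with slope `p` and opening `σ` touches `f` from below at `y`. Supergradients of `f` are
encoded as subgradients of `-f`. -/
def IsProximalSubgradient (s : Set E) (f : E → ℝ) (y p : E) (σ : ℝ) : Prop :=
  ∀ᶠ x in 𝓝[s] y, f y + ⟪p, x - y⟫ - σ * ‖x - y‖ ^ 2 ≤ f x

namespace IsProximalSubgradient

variable {s t : Set E} {f g : E → ℝ} {y p p' : E} {σ τ : ℝ}

lemma mono_set (h : IsProximalSubgradient t f y p σ) (hst : s ⊆ t) :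
    IsProximalSubgradient s f y p σ :=
  h.filter_mono (nhdsWithin_mono y hst)

lemma congr (h : IsProximalSubgradient s f y p σ) (hfg : f =ᶠ[𝓝[s] y] g) (hy : f y = g y) :
    IsProximalSubgradient s g y p σ := by
  filter_upwards [h, hfg] with x hx hfgx
  rwa [← hy, ← hfgx]

lemma add (hf : IsProximalSubgradient s f y p σ) (hg : IsProximalSubgradient s g y p' τ) :
    IsProximalSubgradient s (fun x => f x + g x) y (p + p') (σ + τ) := by
  filter_upwards [hf, hg] with x hfx hgx
  rw [inner_add_left]
  linarith

lemma const_mul (h : IsProximalSubgradient s f y p σ) {c : ℝ} (hc : 0 ≤ c) :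
    IsProximalSubgradient s (fun x => c * f x) y (c • p) (c * σ) := by
  filter_upwards [h] with x hx
  rw [real_inner_smul_left]
  linarith [mul_le_mul_of_nonneg_left hx hc]

lemma of_isLocalMinOn_add (h : IsProximalSubgradient s (fun x => -g x) y p σ)
    (hmin : IsLocalMinOn (fun x => f x + g x) s y) : IsProximalSubgradient s f y p σ := by
  filter_upwards [h, hmin] with x hx hminx
  linarith

-- The term `‖p‖ ^ 2` in the opening absorbs the quadratic remainder of `e ^ w ≤ 1 + w + w ^ 2`.
lemma neg_exp_neg (h : IsProximalSubgradient s f y p σ) (hτ : σ + ‖p‖ ^ 2 < τ) :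
    IsProximalSubgradient s (fun x => -Real.exp (-f x)) y (Real.exp (-f y) • p)
      (Real.exp (-f y) * τ) := by
  have hsmall : ∀ᶠ x in 𝓝[s] y, (‖p‖ + |σ| * ‖x - y‖) * ‖x - y‖ < 1 := by
    refine mem_nhdsWithin_of_mem_nhds
      (ContinuousAt.eventually_lt (by fun_prop) continuousAt_const ?_)
    simp
  have hsq : ∀ᶠ x in 𝓝[s] y, (‖p‖ + |σ| * ‖x - y‖) ^ 2 < τ - σ := by
    refine mem_nhdsWithin_of_mem_nhds
      (ContinuousAt.eventually_lt (by fun_prop) continuousAt_const ?_)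
    simp only [sub_self, norm_zero, mul_zero, add_zero]
    linarith
  filter_upwards [h, hsmall, hsq] with x hx hx1 hx2
  set w := -⟪p, x - y⟫ + σ * ‖x - y‖ ^ 2 with hw
  have hwabs : |w| ≤ (‖p‖ + |σ| * ‖x - y‖) * ‖x - y‖ := abs_neg_inner_add_mul_norm_sq_le p (x - y) σ
  have hw_sq : w ^ 2 ≤ (τ - σ) * ‖x - y‖ ^ 2 := by
    calc w ^ 2 = |w| ^ 2 := (sq_abs w).symm
      _ ≤ ((‖p‖ + |σ| * ‖x - y‖) * ‖x - y‖) ^ 2 := by gcongr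
      _ = (‖p‖ + |σ| * ‖x - y‖) ^ 2 * ‖x - y‖ ^ 2 := mul_pow _ _ _
      _ ≤ _ := by gcongr
  have hexp_w : Real.exp w ≤ 1 + w + w ^ 2 := by
    linarith [(abs_le.mp (Real.abs_exp_sub_one_sub_id_le (hwabs.trans hx1.le))).2]
  have hexp : Real.exp (-f x) ≤ Real.exp (-f y) * (1 + w + (τ - σ) * ‖x - y‖ ^ 2) := by
    calc Real.exp (-f x) ≤ Real.exp (-f y + w) := Real.exp_le_exp.mpr (by linarith)
      _ = Real.exp (-f y) * Real.exp w := Real.exp_add _ _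
      _ ≤ _ := by gcongr; linarith
  rw [real_inner_smul_left]
  calc -Real.exp (-f y) + Real.exp (-f y) * ⟪p, x - y⟫ - Real.exp (-f y) * τ * ‖x - y‖ ^ 2
      = -(Real.exp (-f y) * (1 + w + (τ - σ) * ‖x - y‖ ^ 2)) := by rw [hw]; ring
    _ ≤ -Real.exp (-f x) := neg_le_neg hexp

end IsProximalSubgradient

lemma isProximalSubgradient_neg_log_norm_sub {y z : E} (hyz : y ≠ z) (s : Set E) :
    IsProximalSubgradient s (fun x => -Real.log ‖x - z‖) y
      (-(1 / ‖y - z‖ ^ 2) • (y - z)) (1 / (2 * ‖y - z‖ ^ 2)) := by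
  have hy : 0 < ‖y - z‖ := norm_pos_iff.mpr (sub_ne_zero.mpr hyz)
  filter_upwards [mem_nhdsWithin_of_mem_nhds (isOpen_ne.mem_nhds hyz)] with x hxz
  have hx : 0 < ‖x - z‖ := norm_pos_iff.mpr (sub_ne_zero.mpr hxz)
  have hlog : 2 * (Real.log ‖x - z‖ - Real.log ‖y - z‖) ≤ ‖x - z‖ ^ 2 / ‖y - z‖ ^ 2 - 1 := by
    have := Real.log_le_sub_one_of_pos (x := ‖x - z‖ ^ 2 / ‖y - z‖ ^ 2) (by positivity)
    rw [Real.log_div (by positivity) (by positivity), Real.log_pow, Real.log_pow] at this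
    push_cast at this
    linarith
  have hexpand : ‖x - z‖ ^ 2 = ‖y - z‖ ^ 2 + 2 * ⟪y - z, x - y⟫ + ‖x - y‖ ^ 2 := by
    rw [← norm_add_sq_real, sub_add_sub_cancel']
  have hquot : ‖x - z‖ ^ 2 / ‖y - z‖ ^ 2 - 1
      = 2 * (1 / ‖y - z‖ ^ 2 * ⟪y - z, x - y⟫ + 1 / (2 * ‖y - z‖ ^ 2) * ‖x - y‖ ^ 2) := by
    rw [hexpand]
    field_simp
    ring
  rw [real_inner_smul_left]
  linarith

lemma exists_eventually_isProximalSubgradient_gradient [CompleteSpace E] {f : E → ℝ}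
    (hf : ContDiff ℝ 2 f) (x₀ : E) :
    ∃ D ≥ 0, ∀ᶠ y in 𝓝 x₀, IsProximalSubgradient univ f y (gradient f y) D := by
  have hdiff : Differentiable ℝ f := hf.differentiable (by norm_num)
  obtain ⟨D, t, ht, hLip⟩ := ((hf.fderiv_right (m := 1) (by norm_num)).contDiffAt
    (x := x₀)).exists_lipschitzOnWith
  obtain ⟨R, hR, hRt⟩ := Metric.mem_nhds_iff.mp ht
  refine ⟨D, D.coe_nonneg, ?_⟩
  filter_upwards [ball_mem_nhds x₀ hR] with y hy
  filter_upwards [mem_nhdsWithin_of_mem_nhds (isOpen_ball.mem_nhds hy)] with x hx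
  have hseg : segment ℝ y x ⊆ ball x₀ R := (convex_ball x₀ R).segment_subset hy hx
  have hderiv : ∀ w ∈ segment ℝ y x, ‖fderiv ℝ f w - fderiv ℝ f y‖ ≤ D * ‖x - y‖ := by
    intro w hw
    refine (hLip.norm_sub_le (hRt (hseg hw)) (hRt hy)).trans ?_
    gcongr
    rw [← dist_eq_norm, ← dist_eq_norm, dist_comm w, dist_comm x]
    linarith [dist_add_dist_of_mem_segment hw, dist_nonneg (x := w) (y := x)]
  have hmean := (convex_segment (𝕜 := ℝ) y x).norm_image_sub_le_of_norm_fderiv_le'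
    (fun w _ => hdiff w) hderiv (left_mem_segment ℝ y x) (right_mem_segment ℝ y x)
  rw [← toDual_gradient, InnerProductSpace.toDual_apply_apply, Real.norm_eq_abs] at hmean
  linarith [(abs_le.mp hmean).1]

end ProximalSubgradient

section QuadPoly

variable {N : ℕ} {p y : EN N} {X : Mat N}

/-- The quadratic polynomial with value `0`, gradient `p` and (for symmetric `X`) Hessian `X` at
`y`; it serves as a test function. -/
def quadPoly (p : EN N) (X : Mat N) (y x : EN N) : ℝ :=
  ⟪p, x - y⟫ + 1 / 2 * ⟪x - y, Matrix.toEuclideanCLM (𝕜 := ℝ) X (x - y)⟫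

lemma quadPoly_self : quadPoly p X y y = 0 := by
  simp [quadPoly]

lemma contDiff_quadPoly : ContDiff ℝ 2 (quadPoly p X y) := by
  have hsub : ContDiff ℝ 2 fun x : EN N => x - y := contDiff_id.sub contDiff_const
  exact (contDiff_const.inner ℝ hsub).add
    (contDiff_const.mul (hsub.inner ℝ ((Matrix.toEuclideanCLM (𝕜 := ℝ) X).contDiff.comp hsub)))

lemma inner_toEuclideanCLM_comm (hX : X.IsSymm) (u w : EN N) :
    ⟪u, Matrix.toEuclideanCLM (𝕜 := ℝ) X w⟫ = ⟪w, Matrix.toEuclideanCLM (𝕜 := ℝ) X u⟫ := by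
  rw [Matrix.inner_toEuclideanCLM, Matrix.inner_toEuclideanCLM, Matrix.dotProduct_mulVec,
    ← Matrix.mulVec_transpose, hX.eq, dotProduct_comm]

lemma hasFDerivAt_quadPoly (hX : X.IsSymm) (x : EN N) :
    HasFDerivAt (quadPoly p X y)
      (innerSL ℝ (p + Matrix.toEuclideanCLM (𝕜 := ℝ) X (x - y))) x := by
  have hsub : HasFDerivAt (fun x : EN N => x - y) (ContinuousLinearMap.id ℝ (EN N)) x :=
    (hasFDerivAt_id x).sub_const y
  have hX' := (Matrix.toEuclideanCLM (𝕜 := ℝ) X).hasFDerivAt.comp x hsub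
  refine (((hasFDerivAt_const p x).inner ℝ hsub).add
    ((hsub.inner ℝ hX').const_mul (1 / 2))).congr_fderiv (ContinuousLinearMap.ext fun w => ?_)
  change ⟪p, w⟫ + ⟪0, x - y⟫ + 1 / 2 * (⟪x - y, Matrix.toEuclideanCLM (𝕜 := ℝ) X w⟫
    + ⟪w, Matrix.toEuclideanCLM (𝕜 := ℝ) X (x - y)⟫)
      = ⟪p + Matrix.toEuclideanCLM (𝕜 := ℝ) X (x - y), w⟫
  rw [inner_toEuclideanCLM_comm hX (x - y) w, inner_zero_left, inner_add_left,
    real_inner_comm w (Matrix.toEuclideanCLM (𝕜 := ℝ) X (x - y))]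
  ring

lemma gradient_quadPoly (hX : X.IsSymm) : gradient (quadPoly p X y) y = p := by
  rw [gradient, (hasFDerivAt_quadPoly hX y).fderiv, sub_self, map_zero, add_zero]
  exact (InnerProductSpace.toDual ℝ (EN N)).symm_apply_apply p

lemma hess_quadPoly (hX : X.IsSymm) : hess (quadPoly p X y) y = X := by
  have hfderiv : fderiv ℝ (quadPoly p X y)
      = fun x => innerSL ℝ (p + Matrix.toEuclideanCLM (𝕜 := ℝ) X (x - y)) :=
    funext fun x => (hasFDerivAt_quadPoly hX x).fderiv
  have hsub : HasFDerivAt (fun x : EN N => x - y) (ContinuousLinearMap.id ℝ (EN N)) y :=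
    (hasFDerivAt_id y).sub_const y
  have hderiv2 : HasFDerivAt (fderiv ℝ (quadPoly p X y))
      ((innerSL ℝ).comp (Matrix.toEuclideanCLM (𝕜 := ℝ) X)) y := by
    rw [hfderiv]
    exact ((innerSL ℝ).hasFDerivAt.comp y
      (((Matrix.toEuclideanCLM (𝕜 := ℝ) X).hasFDerivAt.comp y hsub).const_add p))
  ext i j
  rw [hess, Matrix.of_apply, iteratedFDeriv_two_apply, hderiv2.fderiv]
  change ⟪Matrix.toEuclideanCLM (𝕜 := ℝ) X (EuclideanSpace.single i 1),
    EuclideanSpace.single j 1⟫ = X i j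
  rw [real_inner_comm, Matrix.inner_toEuclideanCLM]
  simp [hX.apply]

lemma quadPoly_smul_one (s : ℝ) (x : EN N) :
    quadPoly p (s • (1 : Mat N)) y x = ⟪p, x - y⟫ + s / 2 * ‖x - y‖ ^ 2 := by
  rw [quadPoly, map_smul, map_one, smul_apply,
    one_apply_eq_self, real_inner_smul_right, real_inner_self_eq_norm_sq]
  ring

lemma quadPoly_add (Y : Mat N) (x : EN N) :
    quadPoly p (X + Y) y x =
      quadPoly p X y x + 1 / 2 * ⟪x - y, Matrix.toEuclideanCLM (𝕜 := ℝ) Y (x - y)⟫ := by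
  rw [quadPoly, quadPoly, map_add, add_apply, inner_add_right]
  ring

lemma inner_toEuclideanCLM_vecMulVec_self (n x : EN N) :
    ⟪x, Matrix.toEuclideanCLM (𝕜 := ℝ) (Matrix.vecMulVec n n) x⟫ = ⟪n, x⟫ ^ 2 := by
  rw [Matrix.inner_toEuclideanCLM, Matrix.vecMulVec_mulVec,
    EuclideanSpace.inner_eq_star_dotProduct]
  simp [dotProduct_comm n.ofLp, sq]

lemma trace_vecMulVec_self (n : EN N) : (Matrix.vecMulVec n n).trace = ‖n‖ ^ 2 := by
  rw [Matrix.trace_vecMulVec, EuclideanSpace.real_norm_sq_eq, dotProduct]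
  simp only [sq]

end QuadPoly

section ViscosityTests

variable {N : ℕ} {Ω : Set (EN N)} {nv : EN N → EN N} {F : EN N → EN N → Mat N → ℝ}
  {b : EN N → EN N} {α a A : ℝ} {c₀ : EN N → ℝ → ℝ} {g v : EN N → ℝ} {B : EN N → ℝ → EN N → ℝ}
  {y p : EN N}

namespace IsSuperSol

lemma le_of_quadPoly_touches (hsup : IsSuperSol Ω F b α c₀ g B v) (hy : y ∈ Ω) (hp : p ≠ 0)
    {X : Mat N} (hX : X.IsSymm)
    (htouch : ∀ᶠ x in 𝓝[closure Ω] y, v y + quadPoly p X y x ≤ v x) :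
    F y p X + ⟪b y, p⟫ * ‖p‖ ^ α + c₀ y (v y) ≤ g y := by
  have hmin : IsLocalMinOn (fun x => v x - quadPoly p X y x) (closure Ω) y := by
    filter_upwards [htouch] with x hx
    rw [quadPoly_self]
    linarith
  have h := hsup.1 y hy _ contDiff_quadPoly hmin (by rwa [gradient_quadPoly hX])
  rwa [gradient_quadPoly hX, hess_quadPoly hX] at h

lemma le_or_nonneg_of_quadPoly_touches (hsup : IsSuperSol Ω F b α c₀ g B v)
    (hy : y ∈ frontier Ω) (hp : p ≠ 0) {X : Mat N} (hX : X.IsSymm)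
    (htouch : ∀ᶠ x in 𝓝[closure Ω] y, v y + quadPoly p X y x ≤ v x) :
    F y p X + ⟪b y, p⟫ * ‖p‖ ^ α + c₀ y (v y) ≤ g y ∨ 0 ≤ B y (v y) p := by
  have hmin : IsLocalMinOn (fun x => v x - quadPoly p X y x) (closure Ω) y := by
    filter_upwards [htouch] with x hx
    rw [quadPoly_self]
    linarith
  have h := hsup.2.2.1 y hy _ contDiff_quadPoly hmin (by rwa [gradient_quadPoly hX])
  rwa [gradient_quadPoly hX, hess_quadPoly hX, le_max_iff, sub_nonneg] at h

end IsSuperSol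

lemma neg_mul_le_of_condF2 (hF2 : CondF2 Ω α a A F) (hy : y ∈ closure Ω) (hp : p ≠ 0)
    (hF0 : F y p 0 = 0) {s : ℝ} (hs : 0 ≤ s) :
    -(A * ‖p‖ ^ α * (s * N)) ≤ F y p (-s • (1 : Mat N)) := by
  have h := (hF2.2.2 y hy p hp (-s • (1 : Mat N)) (s • (1 : Mat N)) (Matrix.isSymm_one.smul _)
    (Matrix.PosSemidef.one.smul hs)).2
  rw [neg_smul, neg_add_cancel, hF0, Matrix.trace_smul, Matrix.trace_one, Fintype.card_fin,
    smul_eq_mul, ← neg_smul] at h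
  linarith

lemma IsSuperSol.le_of_isProximalSubgradient (hsup : IsSuperSol Ω F b α c₀ g B v)
    (hF2 : CondF2 Ω α a A F) (hy : y ∈ Ω) (hp : p ≠ 0) (hF0 : F y p 0 = 0) {T : ℝ} (hT : 0 ≤ T)
    (h : IsProximalSubgradient (closure Ω) v y p (T * ‖p‖)) :
    c₀ y (v y) ≤ g y + (2 * A * N * T + ‖b y‖) * ‖p‖ ^ (α + 1) := by
  have htouch : ∀ᶠ x in 𝓝[closure Ω] y,
      v y + quadPoly p (-(2 * (T * ‖p‖)) • (1 : Mat N)) y x ≤ v x := by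
    filter_upwards [h] with x hx
    rw [quadPoly_smul_one]
    linarith
  have heq := hsup.le_of_quadPoly_touches hy hp (Matrix.isSymm_one.smul _) htouch
  have hell := neg_mul_le_of_condF2 hF2 (subset_closure hy) hp hF0
    (s := 2 * (T * ‖p‖)) (by positivity)
  have hdrift : -(‖b y‖ * ‖p‖ * ‖p‖ ^ α) ≤ ⟪b y, p⟫ * ‖p‖ ^ α := by
    rw [← neg_mul]
    gcongr
    exact (abs_le.mp (abs_real_inner_le_norm (b y) p)).1
  rw [Real.rpow_add_one (norm_ne_zero_iff.mpr hp)]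
  linarith

lemma IsProximalSubgradient.eventually_add_quadPoly_le {s : Set (EN N)} {T R σ K : ℝ} {n : EN N}
    (h : IsProximalSubgradient s v y p T) (hR : 0 ≤ R)
    (hn : ∀ x ∈ s, ⟪n, x - y⟫ ≤ R * ‖x - y‖ ^ 2) (hσ : 0 < σ) :
    ∀ᶠ x in 𝓝[s] y, v y + quadPoly (p + σ • n)
      (-(2 * (T + (σ + 1) * R)) • (1 : Mat N) + (2 * K) • Matrix.vecMulVec n n) y x ≤ v x := by
  have hsmall : ∀ᶠ x in 𝓝[s] y, K * |⟪n, x - y⟫| < min σ 1 := by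
    refine mem_nhdsWithin_of_mem_nhds
      (ContinuousAt.eventually_lt (by fun_prop) continuousAt_const ?_)
    simpa using hσ
  filter_upwards [h, hsmall, self_mem_nhdsWithin] with x hx hxK hxs
  obtain ⟨hKσ, hK1⟩ := lt_min_iff.mp hxK
  have hnormal : σ * ⟪n, x - y⟫ + K * ⟪n, x - y⟫ ^ 2 ≤ (σ + 1) * (R * ‖x - y‖ ^ 2) := by
    have hRx : 0 ≤ (σ + 1) * (R * ‖x - y‖ ^ 2) := by positivity
    have hnx := hn x hxs
    rcases le_total ⟪n, x - y⟫ 0 with hneg | hpos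
    · rw [abs_of_nonpos hneg] at hKσ
      nlinarith
    · rw [abs_of_nonneg hpos] at hK1
      nlinarith
  rw [quadPoly_add, quadPoly_smul_one, map_smul, smul_apply, real_inner_smul_right,
    inner_toEuclideanCLM_vecMulVec_self, inner_add_left, real_inner_smul_left]
  linarith

-- An arbitrarily large multiple of `n ⊗ n` can be added to the Hessian of the test function at an
-- arbitrarily small cost in its normal slope, and ellipticity then violates the equation.
lemma IsSuperSol.not_isProximalSubgradient_of_inner_neg
    (hsup : IsSuperSol Ω F b α c₀ g (BNeu nv) v) (hF2 : CondF2 Ω α a A F) (hy : y ∈ frontier Ω)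
    (hny : ‖nv y‖ = 1) {R : ℝ} (hR : 0 ≤ R)
    (hn : ∀ x ∈ closure Ω, ⟪nv y, x - y⟫ ≤ R * ‖x - y‖ ^ 2) (hp : ⟪p, nv y⟫ < 0) (T : ℝ) :
    ¬ IsProximalSubgradient (closure Ω) v y p T := by
  intro h
  set σ := -⟪p, nv y⟫ / 2 with hσ
  set p' := p + σ • nv y with hp'
  have hp'n : ⟪p', nv y⟫ < 0 := by
    rw [hp', inner_add_left, real_inner_smul_left, real_inner_self_eq_norm_sq, hny]
    linarith
  have hp'0 : p' ≠ 0 := fun h0 => by simp [h0] at hp'n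
  set M : Mat N := -(2 * (T + (σ + 1) * R)) • (1 : Mat N)
  have hM : M.IsSymm := Matrix.isSymm_one.smul _
  have hpsd : ∀ K : ℝ, 0 ≤ K → ((2 * K) • Matrix.vecMulVec (nv y) (nv y)).PosSemidef :=
    fun K hK => (Matrix.posSemidef_vecMulVec_self_star _).smul (by positivity)
  have hbound : ∀ K : ℝ, 0 ≤ K →
      F y p' M + a * ‖p'‖ ^ α * (2 * K) + ⟪b y, p'⟫ * ‖p'‖ ^ α + c₀ y (v y)
      ≤ g y := by
    intro K hK
    have hsymm : (M + (2 * K) • Matrix.vecMulVec (nv y) (nv y)).IsSymm :=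
      hM.add (Matrix.IsSymm.smul (Matrix.transpose_vecMulVec _ _) _)
    have heq := (hsup.le_or_nonneg_of_quadPoly_touches hy hp'0 hsymm
      (h.eventually_add_quadPoly_le hR hn (by linarith))).resolve_right hp'n.not_ge
    have hell := (hF2.2.2 y (frontier_subset_closure hy) p' hp'0 M _ hM (hpsd K hK)).1
    rw [Matrix.trace_smul, trace_vecMulVec_self, hny, one_pow, smul_eq_mul, mul_one] at hell
    linarith
  have hcoef : 0 < 2 * (a * ‖p'‖ ^ α) :=
    mul_pos two_pos (mul_pos hF2.1 (Real.rpow_pos_of_pos (norm_pos_iff.mpr hp'0) α))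
  obtain ⟨K, hK⟩ := exists_nat_gt
    ((g y - F y p' M - ⟪b y, p'⟫ * ‖p'‖ ^ α - c₀ y (v y)) / (2 * (a * ‖p'‖ ^ α)))
  rw [div_lt_iff₀ hcoef] at hK
  linarith [hbound K K.cast_nonneg]

end ViscosityTests

section Domain

lemma eventually_add_smul_lt_of_hasStrictFDerivAt {E : Type*} [NormedAddCommGroup E]
    [NormedSpace ℝ E] {f : E → ℝ} {f' : E →L[ℝ] ℝ} {x w : E} (hf : HasStrictFDerivAt f f' x)
    (hw : f' w < 0) :
    ∀ᶠ P : E × ℝ in 𝓝 (x, 0), 0 < P.2 → f (P.1 + P.2 • w) < f P.1 := by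
  have hw0 : 0 < ‖w‖ := norm_pos_iff.mpr fun h0 => by simp [h0] at hw
  have hlim : Tendsto (fun P : E × ℝ => (P.1 + P.2 • w, P.1)) (𝓝 (x, 0)) (𝓝 (x, x)) := by
    have hcont : Continuous fun P : E × ℝ => (P.1 + P.2 • w, P.1) := by fun_prop
    simpa using hcont.tendsto (x, 0)
  have hε : 0 < -f' w / (2 * ‖w‖) := by have := neg_pos.mpr hw; positivity
  filter_upwards [hlim.eventually (hf.isLittleO.bound hε)] with P hP htpos
  rw [add_sub_cancel_left, norm_smul, map_smul, smul_eq_mul, Real.norm_of_nonneg htpos.le] at hP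
  have hcancel : -f' w / (2 * ‖w‖) * (P.2 * ‖w‖) = -(P.2 * f' w) / 2 := by field_simp
  have hdescent : P.2 * f' w < 0 := mul_neg_of_pos_of_neg htpos hw
  linarith [Real.le_norm_self (f (P.1 + P.2 • w) - f P.1 - P.2 * f' w)]

lemma inner_sub_le_of_ball_inter_eq_empty {E : Type*} [NormedAddCommGroup E]
    [InnerProductSpace ℝ E] {s : Set E} {x y n : E} {r : ℝ} (hn : ‖n‖ = 1) (hr : 0 < r)
    (hball : ball (y + r • n) r ∩ s = ∅) (hx : x ∈ closure s) :
    ⟪n, x - y⟫ ≤ 1 / (2 * r) * ‖x - y‖ ^ 2 := by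
  have hdisj := (disjoint_iff_inter_eq_empty.mpr hball).closure_right isOpen_ball
  have hdist : r ≤ ‖x - y - r • n‖ := by
    rw [sub_sub, ← dist_eq_norm]
    exact not_lt.mp fun hlt => hdisj.notMem_of_mem_left hlt hx
  have hsq : r ^ 2 ≤ ‖x - y‖ ^ 2 - 2 * (r * ⟪n, x - y⟫) + r ^ 2 := by
    calc r ^ 2 ≤ ‖x - y - r • n‖ ^ 2 := by gcongr
      _ = _ := by
        rw [norm_sub_sq_real, real_inner_smul_right, real_inner_comm, norm_smul, hn, mul_one,
          Real.norm_of_nonneg hr.le]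
  rw [one_div_mul_eq_div, le_div_iff₀ (by positivity)]
  linarith

namespace IsC2DefiningFun

variable {N : ℕ} {Ω : Set (EN N)} {nv : EN N → EN N} {ρ d : EN N → ℝ} {y : EN N}

lemma isOpen (hρ : IsC2DefiningFun Ω nv ρ) : IsOpen Ω :=
  hρ.2.1 ▸ isOpen_lt hρ.1.continuous continuous_const

lemma eq_zero_of_mem_frontier (hρ : IsC2DefiningFun Ω nv ρ) (hy : y ∈ frontier Ω) : ρ y = 0 := by
  rwa [hρ.2.2.1] at hy

lemma nonpos_of_mem_closure (hρ : IsC2DefiningFun Ω nv ρ) (hy : y ∈ closure Ω) : ρ y ≤ 0 := by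
  rw [hρ.2.1] at hy
  exact closure_lt_subset_le hρ.1.continuous continuous_const hy

lemma norm_normal (hρ : IsC2DefiningFun Ω nv ρ) (hy : y ∈ frontier Ω) : ‖nv y‖ = 1 := by
  obtain ⟨hgrad, hny⟩ := hρ.2.2.2 y hy
  rw [hny, norm_smul, norm_inv, norm_norm, inv_mul_cancel₀ (norm_ne_zero_iff.mpr hgrad)]

lemma fderiv_normal (hρ : IsC2DefiningFun Ω nv ρ) (hy : y ∈ frontier Ω) :
    fderiv ℝ ρ y (nv y) = ‖gradient ρ y‖ := by
  obtain ⟨hgrad, hny⟩ := hρ.2.2.2 y hy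
  rw [← inner_gradient_left, hny, real_inner_smul_right, real_inner_self_eq_norm_sq]
  field_simp [norm_ne_zero_iff.mpr hgrad]

lemma hasStrictFDerivAt (hρ : IsC2DefiningFun Ω nv ρ) (y : EN N) :
    HasStrictFDerivAt ρ (fderiv ℝ ρ y) y :=
  hρ.1.contDiffAt.hasStrictFDerivAt two_ne_zero

lemma fderiv_neg_normal_neg (hρ : IsC2DefiningFun Ω nv ρ) (hy : y ∈ frontier Ω) :
    fderiv ℝ ρ y (-nv y) < 0 := by
  rw [map_neg, hρ.fderiv_normal hy, neg_lt_zero, norm_pos_iff]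
  exact (hρ.2.2.2 y hy).1

lemma eventually_sub_smul_normal_mem (hρ : IsC2DefiningFun Ω nv ρ) (hy : y ∈ frontier Ω) :
    ∀ᶠ P : EN N × ℝ in 𝓝 (y, 0), P.1 ∈ closure Ω → 0 < P.2 → P.1 + P.2 • -nv y ∈ Ω := by
  filter_upwards [eventually_add_smul_lt_of_hasStrictFDerivAt (hρ.hasStrictFDerivAt y)
    (hρ.fderiv_neg_normal_neg hy)] with P hP hPc htpos
  have hlt := (hP htpos).trans_le (hρ.nonpos_of_mem_closure hPc)
  rwa [hρ.2.1]

lemma exists_inward_direction (hρ : IsC2DefiningFun Ω nv ρ) (hy : y ∈ closure Ω) :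
    ∃ w : EN N, ∀ᶠ P : EN N × ℝ in 𝓝 (y, 0), P.1 ∈ closure Ω → 0 < P.2 → P.1 + P.2 • w ∈ Ω := by
  by_cases hyf : y ∈ frontier Ω
  · exact ⟨-nv y, hρ.eventually_sub_smul_normal_mem hyf⟩
  · have hyΩ : y ∈ Ω := by
      by_contra hyΩ
      exact hyf ⟨hy, by rwa [hρ.isOpen.interior_eq]⟩
    refine ⟨0, ?_⟩
    filter_upwards [continuous_fst.continuousAt (hρ.isOpen.mem_nhds hyΩ)] with P hP _ _
    rwa [smul_zero, add_zero]

lemma eventually_neg_le_infDist (hρ : IsC2DefiningFun Ω nv ρ) (hy : y ∈ frontier Ω) {K : ℝ}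
    (hK : ‖gradient ρ y‖ < K) :
    ∀ᶠ x in 𝓝 y, -ρ x ≤ K * infDist x (frontier Ω) := by
  lift K to ℝ≥0 using (norm_nonneg _).trans hK.le
  have hK' : ‖fderiv ℝ ρ y‖₊ < K := by
    rwa [← NNReal.coe_lt_coe, coe_nnnorm, ← toDual_gradient, LinearIsometryEquiv.norm_map]
  obtain ⟨s, hs, hLip⟩ :=
    (hρ.hasStrictFDerivAt y).exists_lipschitzOnWith_of_nnnorm_lt K hK'
  obtain ⟨ε, hε, hεs⟩ := Metric.mem_nhds_iff.mp hs
  filter_upwards [ball_mem_nhds y (half_pos hε)] with x hx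
  obtain ⟨z, hz, hxz⟩ := isClosed_frontier.exists_infDist_eq_dist ⟨y, hy⟩ x
  have hxy : dist x y < ε / 2 := hx
  have hzs : z ∈ s := by
    refine hεs (mem_ball.mpr ?_)
    have hle : dist x z ≤ dist x y := hxz ▸ infDist_le_dist_of_mem hy
    linarith [dist_triangle_left z y x]
  have hxs : x ∈ s := hεs (mem_ball.mpr (by linarith))
  have hle := hLip.dist_le_mul x hxs z hzs
  rw [Real.dist_eq, hρ.eq_zero_of_mem_frontier hz, sub_zero, ← hxz] at hle
  exact (neg_le_abs _).trans hle

lemma inner_gradient_normal_le_neg_one (hρ : IsC2DefiningFun Ω nv ρ) (hy : y ∈ frontier Ω)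
    (hd : DifferentiableAt ℝ d y)
    (hdist : ∀ᶠ x in 𝓝[closure Ω] y, d x = infDist x (frontier Ω)) :
    ⟪gradient d y, nv y⟫ ≤ -1 := by
  have hgrad : 0 < ‖gradient ρ y‖ := norm_pos_iff.mpr (hρ.2.2.2 y hy).1
  have hyc : y ∈ closure Ω := frontier_subset_closure hy
  have hcone : -nv y ∈ posTangentConeAt (closure Ω) y := by
    refine mem_posTangentConeAt_of_frequently_mem (Eventually.frequently ?_)
    have hpath : Tendsto (fun t : ℝ => (y, t)) (𝓝[>] 0) (𝓝 (y, 0)) :=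
      (Continuous.tendsto (by fun_prop) 0).mono_left nhdsWithin_le_nhds
    filter_upwards [hpath.eventually (hρ.eventually_sub_smul_normal_mem hy), self_mem_nhdsWithin]
      with t ht htpos
    exact subset_closure (ht hyc htpos)
  have hslope : ∀ K > ‖gradient ρ y‖, K * ⟪gradient d y, nv y⟫ ≤ -‖gradient ρ y‖ := by
    intro K hK
    have hmin : IsLocalMinOn (fun x => K * d x + ρ x) (closure Ω) y := by
      filter_upwards [hdist, mem_nhdsWithin_of_mem_nhds (hρ.eventually_neg_le_infDist hy hK)]
        with x hx hρx
      rw [hdist.self_of_nhdsWithin hyc, infDist_zero_of_mem hy, hρ.eq_zero_of_mem_frontier hy, hx]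
      linarith
    have hderiv := (hd.hasFDerivAt.const_mul K).add (hρ.hasStrictFDerivAt y).hasFDerivAt
    have h := hmin.hasFDerivWithinAt_nonneg hderiv.hasFDerivWithinAt hcone
    rw [add_apply, smul_apply, smul_eq_mul, map_neg, map_neg,
      hρ.fderiv_normal hy, ← inner_gradient_left] at h
    linarith
  have hlim : Tendsto (fun K => K * ⟪gradient d y, nv y⟫) (𝓝[>] ‖gradient ρ y‖)
      (𝓝 (‖gradient ρ y‖ * ⟪gradient d y, nv y⟫)) :=
    (Continuous.tendsto (by fun_prop) _).mono_left nhdsWithin_le_nhds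
  have hle := le_of_tendsto hlim (eventually_mem_nhdsWithin.mono hslope)
  nlinarith

end IsC2DefiningFun

end Domain

section LocallyConstant

variable {E : Type*} [NormedAddCommGroup E] [NormedSpace ℝ E] {f : E → ℝ} {c q : ℝ}

lemma eq_of_abs_sub_le_rpow_of_segment_subset {V : Set E} (hq : 1 < q)
    (hf : ∀ x ∈ V, ∀ y ∈ V, |f x - f y| ≤ c * ‖x - y‖ ^ q) {x y : E}
    (hxy : segment ℝ x y ⊆ V) : f x = f y := by
  have hderiv : ∀ z ∈ segment ℝ x y, HasFDerivWithinAt f (0 : E →L[ℝ] ℝ) (segment ℝ x y) z := by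
    intro z hz
    have hlim : Tendsto (fun w => c * ‖w - z‖ ^ (q - 1)) (𝓝 z) (𝓝 0) := by
      have hcont : Continuous fun w => c * ‖w - z‖ ^ (q - 1) := by fun_prop (disch := linarith)
      simpa [Real.zero_rpow (sub_pos.mpr hq).ne'] using hcont.tendsto z
    refine .of_isLittleO (Asymptotics.isLittleO_iff.mpr fun ε hε => ?_)
    filter_upwards [self_mem_nhdsWithin, mem_nhdsWithin_of_mem_nhds (hlim.eventually_le_const hε)]
      with w hw hsmall
    rw [zero_apply, sub_zero, Real.norm_eq_abs]
    calc |f w - f z| ≤ c * ‖w - z‖ ^ (q - 1 + 1) := by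
          rw [sub_add_cancel]
          exact hf w (hxy hw) z (hxy hz)
      _ = c * ‖w - z‖ ^ (q - 1) * ‖w - z‖ := by
          rw [Real.rpow_add_one' (norm_nonneg _) (by linarith), mul_assoc]
      _ ≤ ε * ‖w - z‖ := by gcongr
  have h := (convex_segment x y).norm_image_sub_le_of_norm_hasFDerivWithin_le hderiv (C := 0)
    (by simp) (right_mem_segment ℝ x y) (left_mem_segment ℝ x y)
  rwa [zero_mul, norm_le_zero_iff, sub_eq_zero] at h

lemma exists_eventually_eq_of_abs_sub_le_rpow {U : Set E} (hU : IsOpen U) {x₀ w : E}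
    (hx₀ : x₀ ∈ closure U)
    (hw : ∀ᶠ P : E × ℝ in 𝓝 (x₀, 0), P.1 ∈ closure U → 0 < P.2 → P.1 + P.2 • w ∈ U)
    (hq : 1 < q)
    (hf : ∀ᶠ P : E × E in 𝓝 (x₀, x₀), P.1 ∈ closure U → P.2 ∈ closure U →
      |f P.1 - f P.2| ≤ c * ‖P.1 - P.2‖ ^ q) :
    ∃ a, ∀ᶠ x in 𝓝[closure U] x₀, f x = a := by
  obtain ⟨η, hη, hfη⟩ := Metric.eventually_nhds_iff.mp hf
  have hfV : ∀ x ∈ closure U ∩ ball x₀ η, ∀ y ∈ closure U ∩ ball x₀ η,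
      |f x - f y| ≤ c * ‖x - y‖ ^ q := fun x hx y hy =>
    hfη (y := (x, y)) (max_lt hx.2 hy.2) hx.1 hy.1
  have hnear : ∀ᶠ P : E × ℝ in 𝓝 (x₀, 0), P.1 + P.2 • w ∈ ball x₀ η :=
    ContinuousAt.eventually_mem (f := fun P : E × ℝ => P.1 + P.2 • w) (by fun_prop)
      (by simpa using ball_mem_nhds x₀ hη)
  obtain ⟨ε, hε, hwε⟩ := Metric.eventually_nhds_iff.mp (hw.and hnear)
  have hpush : ∀ x ∈ closure U ∩ ball x₀ ε, ∀ t ∈ Ioo 0 ε, x + t • w ∈ U ∩ ball x₀ η := by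
    intro x hx t ht
    have hdist : dist (x, t) (x₀, 0) < ε :=
      max_lt hx.2 (by rw [Real.dist_eq, sub_zero, abs_of_pos ht.1]; exact ht.2)
    exact ⟨(hwε hdist).1 hx.1 ht.1, (hwε hdist).2⟩
  have ht : ε / 2 ∈ Ioo 0 ε := ⟨half_pos hε, half_lt_self hε⟩
  obtain ⟨δ, hδ, hδU⟩ := Metric.isOpen_iff.mp (hU.inter isOpen_ball) _
    (hpush x₀ ⟨hx₀, mem_ball_self hε⟩ _ ht)
  refine ⟨f (x₀ + (ε / 2) • w), ?_⟩
  filter_upwards [self_mem_nhdsWithin, mem_nhdsWithin_of_mem_nhds (ball_mem_nhds x₀ hε),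
    mem_nhdsWithin_of_mem_nhds (ball_mem_nhds x₀ hη),
    mem_nhdsWithin_of_mem_nhds (ball_mem_nhds x₀ hδ)]
    with x hxU hxε hxη hxδ
  have hmono : U ∩ ball x₀ η ⊆ closure U ∩ ball x₀ η := inter_subset_inter_left _ subset_closure
  have hinward : segment ℝ x (x + (ε / 2) • w) ⊆ closure U ∩ ball x₀ η := by
    simp only [segment_eq_image', add_sub_cancel_left, smul_smul]
    rintro _ ⟨θ, ⟨hθ0, hθ1⟩, rfl⟩
    rcases hθ0.eq_or_lt with rfl | hθ
    · simpa using ⟨hxU, hxη⟩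
    · exact hmono (hpush x ⟨hxU, hxε⟩ _ ⟨by positivity, by nlinarith⟩)
  have hparallel : segment ℝ (x + (ε / 2) • w) (x₀ + (ε / 2) • w) ⊆ closure U ∩ ball x₀ η :=
    ((convex_ball _ δ).segment_subset (by simpa using hxδ) (mem_ball_self hδ)).trans
      (hδU.trans hmono)
  exact (eq_of_abs_sub_le_rpow_of_segment_subset hq hfV hinward).trans
    (eq_of_abs_sub_le_rpow_of_segment_subset hq hfV hparallel)

end LocallyConstant

section Penalization

variable {E : Type*} [NormedAddCommGroup E] {d : E → ℝ} {C q k : ℝ} {x₀ y z : E}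

/-- The penalization `C |x - z| ^ q e ^ (-k d(x))`, as a function of its pole `z` and of `x`. -/
def penal (d : E → ℝ) (C q k : ℝ) (z x : E) : ℝ :=
  C * ‖x - z‖ ^ q * Real.exp (-k * d x)

lemma penal_self (hq : q ≠ 0) : penal d C q k z z = 0 := by
  rw [penal, sub_self, norm_zero, Real.zero_rpow hq, mul_zero, zero_mul]

lemma penal_pos (hC : 0 < C) (hyz : y ≠ z) : 0 < penal d C q k z y := by
  have hu : 0 < ‖y - z‖ := norm_pos_iff.mpr (sub_ne_zero.mpr hyz)
  unfold penal
  positivity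

lemma continuous_penal (hd : Continuous d) (hq : 0 ≤ q) :
    Continuous fun P : E × E => penal d C q k P.1 P.2 := by
  unfold penal
  fun_prop (disch := exact hq)

lemma exists_eventually_penal_le_rpow (hd : Continuous d) (C q k : ℝ) (x₀ : E) :
    ∃ c, ∀ᶠ x in 𝓝 x₀, ∀ z, penal d C q k z x ≤ c * ‖x - z‖ ^ q := by
  have hcont : Continuous fun x => C * Real.exp (-k * d x) := by fun_prop
  refine ⟨C * Real.exp (-k * d x₀) + 1, ?_⟩
  filter_upwards [(hcont.tendsto x₀).eventually_le_const (lt_add_one _)] with x hx z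
  calc penal d C q k z x = C * Real.exp (-k * d x) * ‖x - z‖ ^ q := mul_right_comm _ _ _
    _ ≤ _ := by gcongr

lemma penal_eq_mul_exp_neg (hyz : y ≠ z) :
    penal d C q k z y = C * Real.exp (-(k * d y + q * -Real.log ‖y - z‖)) := by
  have hu : 0 < ‖y - z‖ := norm_pos_iff.mpr (sub_ne_zero.mpr hyz)
  rw [penal, Real.rpow_def_of_pos hu, mul_assoc, ← Real.exp_add]
  ring_nf

variable [InnerProductSpace ℝ E] [CompleteSpace E]

/-- The vector `k ∇d(y) - q (y - z) / |y - z| ^ 2`, the negative of the gradient at `y` of the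
logarithm of `penal d C q k z`. -/
def penalLogSlope (d : E → ℝ) (q k : ℝ) (z y : E) : E :=
  k • gradient d y - (q / ‖y - z‖ ^ 2) • (y - z)

lemma isProximalSubgradient_neg_penal {s : Set E} {D τ : ℝ} (hC : 0 ≤ C) (hq : 0 ≤ q) (hk : 0 ≤ k)
    (hyz : y ≠ z) (hd : IsProximalSubgradient s d y (gradient d y) D)
    (hτ : k * D + q * (1 / (2 * ‖y - z‖ ^ 2)) + ‖penalLogSlope d q k z y‖ ^ 2 < τ) :
    IsProximalSubgradient s (fun x => -penal d C q k z x) y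
      (penal d C q k z y • penalLogSlope d q k z y) (penal d C q k z y * τ) := by
  have hslope : k • gradient d y + q • -(1 / ‖y - z‖ ^ 2) • (y - z) = penalLogSlope d q k z y := by
    rw [penalLogSlope]
    module
  have hlog := (hd.const_mul hk).add
    ((isProximalSubgradient_neg_log_norm_sub hyz s).const_mul hq)
  rw [hslope] at hlog
  have heq : ∀ x ≠ z, C * -Real.exp (-(k * d x + q * -Real.log ‖x - z‖)) = -penal d C q k z x :=
    fun x hx => by rw [penal_eq_mul_exp_neg hx, mul_neg]
  have h := ((hlog.neg_exp_neg hτ).const_mul hC).congr (g := fun x => -penal d C q k z x)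
    (mem_nhdsWithin_of_mem_nhds (mem_of_superset (isOpen_ne.mem_nhds hyz) heq)) (heq y hyz)
  rwa [smul_smul, ← mul_assoc, ← penal_eq_mul_exp_neg hyz] at h

lemma norm_penalLogSlope_mem_Icc (hq : 0 ≤ q) (hk : 0 ≤ k) (hyz : y ≠ z)
    (hsmall : k * ‖gradient d y‖ * ‖y - z‖ ≤ q / 2) :
    ‖penalLogSlope d q k z y‖ * ‖y - z‖ ∈ Icc (q / 2) (3 * q / 2) := by
  have hu : 0 < ‖y - z‖ := norm_pos_iff.mpr (sub_ne_zero.mpr hyz)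
  have hradial : ‖(q / ‖y - z‖ ^ 2) • (y - z)‖ * ‖y - z‖ = q := by
    rw [norm_smul, Real.norm_of_nonneg (by positivity)]
    field_simp
  have hgrad : ‖k • gradient d y‖ = k * ‖gradient d y‖ := by
    rw [norm_smul, Real.norm_of_nonneg hk]
  have hupper := mul_le_mul_of_nonneg_right
    (norm_sub_le (k • gradient d y) ((q / ‖y - z‖ ^ 2) • (y - z))) hu.le
  have hlower := mul_le_mul_of_nonneg_right
    (norm_sub_norm_le ((q / ‖y - z‖ ^ 2) • (y - z)) (k • gradient d y)) hu.le
  rw [norm_sub_rev _ (k • gradient d y)] at hlower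
  rw [hgrad, add_mul, hradial] at hupper
  rw [hgrad, sub_mul, hradial] at hlower
  exact ⟨by rw [penalLogSlope]; linarith, by rw [penalLogSlope]; linarith⟩

lemma inner_penalLogSlope_neg {n : E} {R : ℝ} (hq : 0 ≤ q) (hqk : q * R < k) (hk : 0 ≤ k)
    (hyz : y ≠ z) (hd : ⟪gradient d y, n⟫ ≤ -1) (hn : ⟪n, z - y⟫ ≤ R * ‖z - y‖ ^ 2) :
    ⟪penalLogSlope d q k z y, n⟫ < 0 := by
  have hu : 0 < ‖y - z‖ := norm_pos_iff.mpr (sub_ne_zero.mpr hyz)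
  have hradial : -(q / ‖y - z‖ ^ 2 * ⟪y - z, n⟫) ≤ q * R := by
    calc -(q / ‖y - z‖ ^ 2 * ⟪y - z, n⟫) = q / ‖y - z‖ ^ 2 * ⟪n, z - y⟫ := by
          rw [← neg_sub z y, inner_neg_left, real_inner_comm, norm_neg]
          ring
      _ ≤ q / ‖y - z‖ ^ 2 * (R * ‖y - z‖ ^ 2) := by rw [norm_sub_rev y z]; gcongr
      _ = q * R := by field_simp
  rw [penalLogSlope, inner_sub_left, real_inner_smul_left, real_inner_smul_left]
  linarith [mul_le_mul_of_nonneg_left hd hk]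

lemma eventually_mul_norm_gradient_mul_norm_sub_le (hd : ContDiff ℝ 2 d) (hq : 0 < q) (k : ℝ)
    (x₀ : E) : ∀ᶠ P : E × E in 𝓝 (x₀, x₀), k * ‖gradient d P.1‖ * ‖P.1 - P.2‖ ≤ q := by
  have hgrad : Continuous (gradient d) :=
    (InnerProductSpace.toDual ℝ E).symm.continuous.comp (hd.continuous_fderiv two_ne_zero)
  have hcont : Continuous fun P : E × E => k * ‖gradient d P.1‖ * ‖P.1 - P.2‖ := by fun_prop
  exact (hcont.tendsto (x₀, x₀)).eventually_le_const (by simpa using hq)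

lemma exists_eventually_isProximalSubgradient_neg_penal (hd : ContDiff ℝ 2 d) (hC : 0 < C)
    (hq : 0 < q) (hk : 0 ≤ k) (x₀ : E) :
    ∃ T ≥ 0, ∀ᶠ P : E × E in 𝓝 (x₀, x₀), P.1 ≠ P.2 →
      ‖penalLogSlope d q k P.2 P.1‖ * ‖P.1 - P.2‖ ∈ Icc (q / 2) (3 * q / 2) ∧
      IsProximalSubgradient univ (fun x => -penal d C q k P.2 x) P.1
        (penal d C q k P.2 P.1 • penalLogSlope d q k P.2 P.1)
        (penal d C q k P.2 P.1 * (T * ‖penalLogSlope d q k P.2 P.1‖ ^ 2)) := by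
  obtain ⟨D, hD, hprox⟩ := exists_eventually_isProximalSubgradient_gradient hd x₀
  refine ⟨4 / q ^ 2 * (k * D + 1 + q / 2) + 1, by positivity, ?_⟩
  have hnear : ∀ᶠ P : E × E in 𝓝 (x₀, x₀), ‖P.1 - P.2‖ ≤ 1 :=
    (Continuous.tendsto (by fun_prop) _).eventually_le_const (by simp)
  filter_upwards [continuous_fst.continuousAt.eventually hprox, hnear,
    eventually_mul_norm_gradient_mul_norm_sub_le hd (half_pos hq) k x₀]
    with ⟨y, z⟩ hd_prox hu1 hsmall hyz
  have hu : 0 < ‖y - z‖ := norm_pos_iff.mpr (sub_ne_zero.mpr hyz)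
  have hnorm := norm_penalLogSlope_mem_Icc hq.le hk hyz hsmall
  refine ⟨hnorm, isProximalSubgradient_neg_penal hC.le hq.le hk hyz hd_prox ?_⟩
  set ℓ := ‖penalLogSlope d q k z y‖
  have hinv : 1 / ‖y - z‖ ^ 2 ≤ 4 / q ^ 2 * ℓ ^ 2 := by
    have hsq : (q / 2) ^ 2 ≤ (ℓ * ‖y - z‖) ^ 2 := by gcongr; exact hnorm.1
    rw [div_mul_eq_mul_div, div_le_div_iff₀ (by positivity) (by positivity)]
    linarith
  have hone : 1 ≤ 1 / ‖y - z‖ ^ 2 := one_le_one_div (by positivity) (pow_le_one₀ hu.le hu1)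
  calc k * D + q * (1 / (2 * ‖y - z‖ ^ 2)) + ℓ ^ 2
      < (k * D + 1) * 1 + q / 2 * (1 / ‖y - z‖ ^ 2) + ℓ ^ 2 := by
        have hhalf : q * (1 / (2 * ‖y - z‖ ^ 2)) = q / 2 * (1 / ‖y - z‖ ^ 2) := by ring
        linarith
    _ ≤ (k * D + 1) * (4 / q ^ 2 * ℓ ^ 2) + q / 2 * (4 / q ^ 2 * ℓ ^ 2) + ℓ ^ 2 := by
        gcongr
        exact hone.trans hinv
    _ = (4 / q ^ 2 * (k * D + 1 + q / 2) + 1) * ℓ ^ 2 := by ring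

end Penalization

section LocalEstimate

lemma mul_add_mul_rpow_le {m ℓ Q s c u q B M α : ℝ} (hu : 0 < u) (hu1 : u ≤ 1) (hℓ : 0 ≤ ℓ)
    (hℓu : ℓ * u ≤ Q) (hs : 0 ≤ s) (hsu : s ≤ c * u ^ q) (hm : 0 ≤ m) (hB : 0 ≤ B) (hBM : B ≤ M)
    (hα : 0 ≤ α + 1) :
    (m * ℓ + B) * (s * ℓ) ^ (α + 1) ≤
      (m * Q + M) * (c * Q) ^ (α + 1) * u ^ ((q - 1) * (α + 1) - 1) := by
  have hc : 0 ≤ c := nonneg_of_mul_nonneg_left (hs.trans hsu) (by positivity)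
  have hQ : 0 ≤ Q := (mul_nonneg hℓ hu.le).trans hℓu
  have hℓ_le : ℓ ≤ Q / u := (le_div_iff₀ hu).mpr hℓu
  have hM : 0 ≤ M := hB.trans hBM
  have hM_le : M ≤ M / u := le_div_self hM hu hu1
  have hslope : s * ℓ ≤ c * Q * u ^ (q - 1) := by
    calc s * ℓ ≤ c * u ^ q * (Q / u) := by gcongr
      _ = c * Q * u ^ (q - 1) := by rw [Real.rpow_sub_one hu.ne']; ring
  calc (m * ℓ + B) * (s * ℓ) ^ (α + 1)
      ≤ (m * (Q / u) + M / u) * (c * Q * u ^ (q - 1)) ^ (α + 1) := by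
        gcongr
        exact hBM.trans hM_le
    _ = (m * (Q / u) + M / u) * ((c * Q) ^ (α + 1) * u ^ ((q - 1) * (α + 1))) := by
        rw [Real.mul_rpow (by positivity) (by positivity), ← Real.rpow_mul hu.le]
    _ = (m * Q + M) * (c * Q) ^ (α + 1) * u ^ ((q - 1) * (α + 1) - 1) := by
        rw [Real.rpow_sub_one hu.ne']
        ring

variable {N : ℕ} {Ω : Set (EN N)} {nv : EN N → EN N} {ρ d v g : EN N → ℝ} {r α a A C q k : ℝ}
  {F : EN N → EN N → Mat N → ℝ} {b : EN N → EN N} {c₀ : EN N → ℝ → ℝ}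

namespace IsSuperSol

lemma mem_of_isProximalSubgradient_smul_penalLogSlope (hsup : IsSuperSol Ω F b α c₀ g (BNeu nv) v)
    (hF2 : CondF2 Ω α a A F) (hρ : IsC2DefiningFun Ω nv ρ) (hr : 0 < r)
    (hext : ∀ x ∈ frontier Ω, ball (x + r • nv x) r ∩ Ω = ∅) (hd : Differentiable ℝ d)
    (hdist : ∀ y ∈ frontier Ω, ∀ᶠ x in 𝓝[closure Ω] y, d x = infDist x (frontier Ω))
    (hq : 0 ≤ q) (hk : q / (2 * r) < k) {y z : EN N} (hy : y ∈ closure Ω) (hz : z ∈ closure Ω)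
    (hyz : y ≠ z) {s τ : ℝ} (hs : 0 < s)
    (h : IsProximalSubgradient (closure Ω) v y (s • penalLogSlope d q k z y) τ) : y ∈ Ω := by
  by_contra hyΩ
  have hyf : y ∈ frontier Ω := ⟨hy, fun hmem => hyΩ (interior_subset hmem)⟩
  have hk0 : 0 ≤ k := (by positivity : 0 ≤ q / (2 * r)).trans hk.le
  have hsphere : ∀ x ∈ closure Ω, ⟪nv y, x - y⟫ ≤ 1 / (2 * r) * ‖x - y‖ ^ 2 := fun _ hx =>
    inner_sub_le_of_ball_inter_eq_empty (hρ.norm_normal hyf) hr (hext y hyf) hx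
  have hneg : ⟪penalLogSlope d q k z y, nv y⟫ < 0 :=
    inner_penalLogSlope_neg hq (by rwa [mul_one_div]) hk0 hyz
      (hρ.inner_gradient_normal_le_neg_one hyf (hd y) (hdist y hyf)) (hsphere z hz)
  refine hsup.not_isProximalSubgradient_of_inner_neg hF2 hyf (hρ.norm_normal hyf)
    (by positivity) hsphere ?_ τ h
  rw [real_inner_smul_left]
  exact mul_neg_of_pos_of_neg hs hneg

lemma exists_eventually_le_of_isLocalMinOn_add_penal
    (hsup : IsSuperSol Ω F b α c₀ g (BNeu nv) v)
    (hF2 : CondF2 Ω α a A F) (hF0 : ∀ x ∈ closure Ω, ∀ p : EN N, p ≠ 0 → F x p 0 = 0)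
    (hρ : IsC2DefiningFun Ω nv ρ) (hr : 0 < r)
    (hext : ∀ x ∈ frontier Ω, ball (x + r • nv x) r ∩ Ω = ∅) (hd : ContDiff ℝ 2 d)
    (hdist : ∀ y ∈ frontier Ω, ∀ᶠ x in 𝓝[closure Ω] y, d x = infDist x (frontier Ω))
    (hα : 0 ≤ α + 1) (hb : ∃ M, ∀ x ∈ Ω, ‖b x‖ ≤ M) (hC : 0 < C) (hq : 0 < q)
    (hk : q / (2 * r) < k) (x₀ : EN N) :
    ∃ W, ∀ᶠ P : EN N × EN N in 𝓝 (x₀, x₀), P.1 ∈ closure Ω → P.2 ∈ closure Ω → P.1 ≠ P.2 →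
      IsLocalMinOn (fun x => v x + penal d C q k P.2 x) (closure Ω) P.1 →
      c₀ P.1 (v P.1) ≤ g P.1 + W * ‖P.1 - P.2‖ ^ ((q - 1) * (α + 1) - 1) := by
  obtain ⟨M, hM⟩ := hb
  have hk0 : 0 ≤ k := (by positivity : 0 ≤ q / (2 * r)).trans hk.le
  have hA : 0 ≤ A := hF2.1.le.trans hF2.2.1
  obtain ⟨T, hT, hprox⟩ := exists_eventually_isProximalSubgradient_neg_penal hd hC hq hk0 x₀
  obtain ⟨c, hc⟩ := exists_eventually_penal_le_rpow hd.continuous C q k x₀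
  have hnear : ∀ᶠ P : EN N × EN N in 𝓝 (x₀, x₀), ‖P.1 - P.2‖ ≤ 1 :=
    (Continuous.tendsto (by fun_prop) _).eventually_le_const (by simp)
  refine ⟨(2 * A * N * T * (3 * q / 2) + M) * (c * (3 * q / 2)) ^ (α + 1), ?_⟩
  filter_upwards [hprox, hnear, continuous_fst.continuousAt.eventually hc]
    with ⟨y, z⟩ hprox hu1 hpc hy hz hyz hmin
  have hu : 0 < ‖y - z‖ := norm_pos_iff.mpr (sub_ne_zero.mpr hyz)
  have hpos : 0 < penal d C q k z y := penal_pos hC hyz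
  obtain ⟨⟨hℓ_ge, hℓ_le⟩, hsub⟩ := hprox hyz
  set L := penalLogSlope d q k z y
  have hL : 0 < ‖L‖ := pos_of_mul_pos_left ((half_pos hq).trans_le hℓ_ge) hu.le
  have hnorm : ‖penal d C q k z y • L‖ = penal d C q k z y * ‖L‖ := by
    rw [norm_smul, Real.norm_of_nonneg hpos.le]
  have hv : IsProximalSubgradient (closure Ω) v y (penal d C q k z y • L)
      (T * ‖L‖ * ‖penal d C q k z y • L‖) := by
    rw [hnorm, show T * ‖L‖ * (penal d C q k z y * ‖L‖) = penal d C q k z y * (T * ‖L‖ ^ 2) by ring]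
    exact (hsub.mono_set (subset_univ _)).of_isLocalMinOn_add hmin
  have hyΩ : y ∈ Ω := hsup.mem_of_isProximalSubgradient_smul_penalLogSlope hF2 hρ hr hext
    (hd.differentiable two_ne_zero) hdist hq.le hk hy hz hyz hpos hv
  have hp : penal d C q k z y • L ≠ 0 := smul_ne_zero hpos.ne' (norm_pos_iff.mp hL)
  calc c₀ y (v y) ≤ g y + (2 * A * N * (T * ‖L‖) + ‖b y‖) * ‖penal d C q k z y • L‖ ^ (α + 1) :=
        hsup.le_of_isProximalSubgradient hF2 hyΩ hp (hF0 y hy _ hp) (by positivity) hv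
    _ = g y + (2 * A * N * T * ‖L‖ + ‖b y‖) * (penal d C q k z y * ‖L‖) ^ (α + 1) := by
        rw [hnorm, ← mul_assoc]
    _ ≤ _ := add_le_add le_rfl (mul_add_mul_rpow_le hu hu1 hL.le hℓ_le hpos.le (hpc z)
        (by positivity) (norm_nonneg _) (hM y hyΩ) hα)

end IsSuperSol

end LocalEstimate

section PerturbedMinimizers

lemma exists_isMinOn_tendsto_of_eventually_lt {X Z : Type*} [TopologicalSpace X]
    [LocallyCompactSpace X] [TopologicalSpace Z] {S : Set X} (hS : IsClosed S) {f : X → ℝ}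
    (hf : LowerSemicontinuousOn f S) {P : Z → X → ℝ} (hP : Continuous fun w : Z × X => P w.1 w.2)
    {x₀ : X} (hx₀ : x₀ ∈ S) {z₀ : Z}
    (hmin : ∀ᶠ x in 𝓝[S] x₀, x ≠ x₀ → f x₀ + P z₀ x₀ < f x + P z₀ x) :
    ∃ K ∈ 𝓝 x₀, ∃ y : Z → X,
      (∀ z, y z ∈ K ∩ S ∧ IsMinOn (fun x => f x + P z x) (K ∩ S) (y z)) ∧
      Tendsto y (𝓝 z₀) (𝓝 x₀) ∧ Tendsto (fun z => f (y z)) (𝓝 z₀) (𝓝 (f x₀)) := by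
  obtain ⟨K, hK, hKmin, hKcomp⟩ := local_compact_nhds (mem_nhdsWithin_iff_eventually.mp hmin)
  have hx₀K : x₀ ∈ K ∩ S := ⟨mem_of_mem_nhds hK, hx₀⟩
  have hcomp : IsCompact (K ∩ S) := hKcomp.inter_right hS
  have hfK : LowerSemicontinuousOn f (K ∩ S) := hf.mono inter_subset_right
  have hexists : ∀ z, ∃ y ∈ K ∩ S, IsMinOn (fun x => f x + P z x) (K ∩ S) y := fun z =>
    LowerSemicontinuousOn.exists_isMinOn ⟨x₀, hx₀K⟩ hcomp
      (hfK.add (Continuous.continuousOn (by fun_prop)).lowerSemicontinuousOn)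
  choose y hyK hymin using hexists
  have hgap : LowerSemicontinuousOn (fun w : Z × X => f w.2 + (P w.1 w.2 - P w.1 x₀))
      (univ ×ˢ (K ∩ S)) :=
    (hfK.comp continuous_snd.continuousOn fun _ hw => hw.2).add
      (Continuous.continuousOn (by fun_prop)).lowerSemicontinuousOn
  have hytend : Tendsto y (𝓝 z₀) (𝓝 x₀) := by
    refine hcomp.tendsto_nhds_of_unique_mapClusterPt (.of_forall hyK) fun x hx hcluster => ?_
    by_contra hne
    have hlt := hgap (z₀, x) ⟨mem_univ _, hx⟩ (f x₀) (by linarith [hKmin hx.1 hx.2 hne])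
    rw [nhdsWithin_prod_eq, nhdsWithin_univ] at hlt
    obtain ⟨_, hzlt, _, hxlt, hlt⟩ := eventually_prod_iff.mp hlt
    obtain ⟨z, hxz, hz⟩ :=
      ((hcluster.frequently (eventually_nhdsWithin_iff.mp hxlt)).and_eventually hzlt).exists
    have hle : f (y z) + P z (y z) ≤ f x₀ + P z x₀ := hymin z hx₀K
    linarith [hlt hz (hxz (hyK z))]
  refine ⟨K, hK, y, fun z => ⟨hyK z, hymin z⟩, hytend, ?_⟩
  have hupper : Tendsto (fun z => f x₀ + P z x₀ - P z (y z)) (𝓝 z₀) (𝓝 (f x₀)) := by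
    have hP₁ : Tendsto (fun z => P z x₀) (𝓝 z₀) (𝓝 (P z₀ x₀)) :=
      Continuous.tendsto (by fun_prop) z₀
    simpa using (hP₁.const_add (f x₀)).sub
      ((hP.tendsto (z₀, x₀)).comp (tendsto_id.prodMk_nhds hytend))
  refine tendsto_order.mpr ⟨fun c hc => ?_, fun c hc => ?_⟩
  · exact (tendsto_nhdsWithin_iff.mpr ⟨hytend, .of_forall fun z => (hyK z).2⟩).eventually
      (hf x₀ hx₀ c hc)
  · filter_upwards [hupper.eventually_lt_const hc] with z hz
    have hle : f (y z) + P z (y z) ≤ f x₀ + P z x₀ := hymin z hx₀K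
    linarith

lemma neg_le_of_frequently_neg_le_add {X ι : Type*} [TopologicalSpace X] {l : Filter ι} {S : Set X}
    {β : ℝ → ℝ} (hβ : UpperSemicontinuous β) {g : X → ℝ} (hg : UpperSemicontinuousOn g S) {x₀ : X}
    (hx₀ : x₀ ∈ S) {y : ι → X} (hy : Tendsto y l (𝓝[S] x₀)) {s e : ι → ℝ} {t : ℝ}
    (hs : Tendsto s l (𝓝 t)) (he : Tendsto e l (𝓝 0))
    (h : ∃ᶠ i in l, -β (s i) ≤ g (y i) + e i) : -β t ≤ g x₀ := by
  by_contra! hlt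
  set η := (-β t - g x₀) / 3 with hη
  have hβη := hs.eventually (hβ t (β t + η) (by linarith))
  have hgη := hy.eventually (hg x₀ hx₀ (g x₀ + η) (by linarith))
  have heη := he.eventually_lt_const (u := η) (by linarith)
  obtain ⟨i, hi, hβi, hgi, hei⟩ := (h.and_eventually (hβη.and (hgη.and heη))).exists
  linarith

end PerturbedMinimizers

section MovingPole

lemma not_exists_eventually_eq_of_forall_ball {X Y : Type*} [PseudoMetricSpace X] {f : X → Y}
    {s : Set X} {x₀ : X}
    (hf : ∀ ε > (0 : ℝ), ∃ x ∈ ball x₀ ε ∩ s, ∃ y ∈ ball x₀ ε ∩ s, f x ≠ f y) :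
    ¬∃ a, ∀ᶠ x in 𝓝[s] x₀, f x = a := by
  rintro ⟨a, ha⟩
  obtain ⟨ε, hε, hball⟩ := mem_nhdsWithin_iff.mp ha
  obtain ⟨x, hx, y, hy, hne⟩ := hf ε hε
  exact hne ((hball hx).trans (hball hy).symm)

variable {E : Type*} [NormedAddCommGroup E] [NormedSpace ℝ E] {f d : E → ℝ} {C q k : ℝ}

lemma frequently_exists_add_penal_lt {U K : Set E} (hU : IsOpen U) {x₀ w : E}
    (hx₀ : x₀ ∈ closure U)
    (hw : ∀ᶠ P : E × ℝ in 𝓝 (x₀, 0), P.1 ∈ closure U → 0 < P.2 → P.1 + P.2 • w ∈ U)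
    (hd : Continuous d) (hq : 1 < q)
    (hf : ¬∃ a, ∀ᶠ x in 𝓝[closure U] x₀, f x = a) (hK : K ∈ 𝓝 x₀) :
    ∃ᶠ z in 𝓝[closure U] x₀, ∃ x ∈ K ∩ closure U, f x + penal d C q k z x < f z := by
  intro h
  obtain ⟨c, hc⟩ := exists_eventually_penal_le_rpow hd C q k x₀
  have hle : ∀ᶠ P : E × E in 𝓝 (x₀, x₀), P.1 ∈ closure U → P.2 ∈ closure U →
      f P.1 - f P.2 ≤ c * ‖P.1 - P.2‖ ^ q := by
    filter_upwards [continuous_fst.continuousAt.eventually (eventually_nhdsWithin_iff.mp h),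
      continuous_snd.continuousAt.eventually (hc.and hK)] with ⟨z, x⟩ hz ⟨hpx, hxK⟩ hzU hxU
    have hmin := not_lt.mp fun hlt => hz hzU ⟨x, ⟨hxK, hxU⟩, hlt⟩
    have hpen := hpx z
    rw [norm_sub_rev] at hpen
    linarith
  refine hf (exists_eventually_eq_of_abs_sub_le_rpow (c := c) hU hx₀ hw hq ?_)
  filter_upwards [hle, continuous_swap.continuousAt.eventually hle] with P h₁ h₂ hP₁ hP₂
  refine abs_sub_le_iff.mpr ⟨h₁ hP₁ hP₂, ?_⟩
  rw [norm_sub_rev]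
  exact h₂ hP₂ hP₁

lemma exists_tendsto_frequently_isLocalMinOn_add_penal [LocallyCompactSpace E] {U : Set E}
    (hU : IsOpen U) {x₀ w : E} (hx₀ : x₀ ∈ closure U)
    (hw : ∀ᶠ P : E × ℝ in 𝓝 (x₀, 0), P.1 ∈ closure U → 0 < P.2 → P.1 + P.2 • w ∈ U)
    (hd : Continuous d) (hq : 1 < q) (hlsc : LowerSemicontinuousOn f (closure U))
    (hmin : ∀ᶠ x in 𝓝[closure U] x₀, x ≠ x₀ → f x₀ < f x + penal d C q k x₀ x)
    (hf : ¬∃ a, ∀ᶠ x in 𝓝[closure U] x₀, f x = a) :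
    ∃ y : E → E, Tendsto y (𝓝 x₀) (𝓝[closure U] x₀) ∧
      Tendsto (fun z => f (y z)) (𝓝 x₀) (𝓝 (f x₀)) ∧
      ∃ᶠ z in 𝓝 x₀, z ∈ closure U ∧ y z ≠ z ∧
        IsLocalMinOn (fun x => f x + penal d C q k z x) (closure U) (y z) := by
  have hq0 : 0 < q := one_pos.trans hq
  obtain ⟨K, hK, y, hy, hyx₀, hfy⟩ := exists_isMinOn_tendsto_of_eventually_lt
    (P := penal d C q k) (z₀ := x₀) isClosed_closure hlsc (continuous_penal hd hq0.le) hx₀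
    (by simpa only [penal_self hq0.ne', add_zero] using hmin)
  refine ⟨y, tendsto_nhdsWithin_iff.mpr ⟨hyx₀, .of_forall fun z => (hy z).1.2⟩, hfy, ?_⟩
  have hjump := frequently_nhdsWithin_iff.mp
    (frequently_exists_add_penal_lt (C := C) (k := k) hU hx₀ hw hd hq hf hK)
  have hyK : ∀ᶠ z in 𝓝 x₀, K ∈ 𝓝 (y z) := hyx₀.eventually (eventually_mem_nhds_iff.mpr hK)
  refine (hjump.and_eventually hyK).mono ?_
  rintro z ⟨⟨⟨x, hx, hlt⟩, hzU⟩, hKz⟩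
  refine ⟨hzU, ?_, ?_⟩
  · intro hyz
    have hle : f (y z) + penal d C q k z (y z) ≤ f x + penal d C q k z x := (hy z).2 hx
    rw [hyz, penal_self hq0.ne', add_zero] at hle
    exact hle.not_gt hlt
  · filter_upwards [self_mem_nhdsWithin, mem_nhdsWithin_of_mem_nhds hKz] with x hxU hxK
    exact (hy z).2 ⟨hxK, hxU⟩

end MovingPole

theorem stmt9_general {N : ℕ} {Ω : Set (EN N)} {nv : EN N → EN N} {ρ : EN N → ℝ}
    (hρ : IsC2DefiningFun Ω nv ρ) {r : ℝ} (hr : 0 < r)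
    (hext : ∀ x ∈ frontier Ω, Metric.ball (x + r • nv x) r ∩ Ω = ∅)
    {d : EN N → ℝ} (hd : ContDiff ℝ 2 d)
    (hdist : ∃ U : Set (EN N), IsOpen U ∧ frontier Ω ⊆ U ∧
      ∀ x ∈ U ∩ closure Ω, d x = Metric.infDist x (frontier Ω))
    {α a A : ℝ} (hα : -1 < α) {F : EN N → EN N → Mat N → ℝ} (hF2 : CondF2 Ω α a A F)
    (hF0 : ∀ x ∈ closure Ω, ∀ p : EN N, p ≠ 0 → F x p 0 = 0)
    {b : EN N → EN N} (hb : ∃ M, ∀ x ∈ Ω, ‖b x‖ ≤ M)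
    {β : ℝ → ℝ} (hβ : UpperSemicontinuous β)
    {g : EN N → ℝ} (hg : UpperSemicontinuousOn g (closure Ω))
    {v : EN N → ℝ} (hlsc : LowerSemicontinuousOn v (closure Ω))
    (hsup : IsSuperSol Ω F b α (fun _ r' => -(β r')) g (BNeu nv) v)
    {xb : EN N} (hxb : xb ∈ closure Ω) {C q k : ℝ} (hC : 0 < C)
    (hq : (α + 2) / (α + 1) < q) (hk : q / (2 * r) < k)
    (hmin : ∃ δ > (0 : ℝ), ∀ x ∈ closure Ω, x ≠ xb → ‖x - xb‖ < δ →
      v xb < v x + C * ‖x - xb‖ ^ q * Real.exp (-k * d x))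
    (hnc : ∀ ε > (0 : ℝ), ∃ x ∈ Metric.ball xb ε ∩ closure Ω,
      ∃ y ∈ Metric.ball xb ε ∩ closure Ω, v x ≠ v y) :
    -(β (v xb)) ≤ g xb := by
  have hα1 : 0 < α + 1 := by linarith
  have hκ : 0 < (q - 1) * (α + 1) - 1 := by linarith [(div_lt_iff₀ hα1).mp hq]
  have hq1 : 1 < q := ((one_lt_div hα1).mpr (by linarith)).trans hq
  obtain ⟨V, hV, hVsub, hVd⟩ := hdist
  obtain ⟨δ, hδ, hδmin⟩ := hmin
  obtain ⟨w, hw⟩ := hρ.exists_inward_direction hxb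
  have hstrict : ∀ᶠ x in 𝓝[closure Ω] xb, x ≠ xb → v xb < v x + penal d C q k xb x := by
    filter_upwards [self_mem_nhdsWithin, mem_nhdsWithin_of_mem_nhds (ball_mem_nhds xb hδ)]
      with x hx hxδ hne using hδmin x hx hne (mem_ball_iff_norm.mp hxδ)
  obtain ⟨y, hy, hvy, hfreq⟩ := exists_tendsto_frequently_isLocalMinOn_add_penal hρ.isOpen hxb hw
    hd.continuous hq1 hlsc hstrict (not_exists_eventually_eq_of_forall_ball hnc)
  obtain ⟨hyxb, hyΩ⟩ := tendsto_nhdsWithin_iff.mp hy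
  obtain ⟨W, hW⟩ := hsup.exists_eventually_le_of_isLocalMinOn_add_penal hF2 hF0 hρ hr hext hd
    (fun _ hx => mem_nhdsWithin.mpr ⟨V, hV, hVsub hx, hVd⟩) hα1.le hb hC (by linarith) hk xb
  have herr : Tendsto (fun z => W * ‖y z - z‖ ^ ((q - 1) * (α + 1) - 1)) (𝓝 xb) (𝓝 0) := by
    simpa [Real.zero_rpow hκ.ne'] using
      ((hyxb.sub tendsto_id).norm.rpow_const (.inr hκ.le)).const_mul W
  have hest := hfreq.and_eventually (hyΩ.and ((hyxb.prodMk_nhds tendsto_id).eventually hW))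
  exact neg_le_of_frequently_neg_le_add hβ hg hxb hy hvy herr
    (hest.mono fun _ ⟨⟨hz, hne, hloc⟩, hyz, hle⟩ => hle hyz hz hne hloc)

/-- Lemma `lemxdivy`: if `xb` is a strict local minimum of
`x ↦ v(x) + C|x − xb|^q e^{−k d(x)}` with `k > q/(2r)` and `q > max{2, (α+2)/(α+1)}`,
and `v` is not locally constant around `xb`, then `−β(v(xb)) ≤ g(xb)`. -/
theorem stmt9 {N : ℕ} (Ω : Set (EN N)) (nv : EN N → EN N) (hΩ : IsC2Domain Ω nv)
    (r : ℝ) (hr : 0 < r)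
    (hext : ∀ x ∈ frontier Ω, Metric.ball (x + r • nv x) r ∩ Ω = ∅)
    (d : EN N → ℝ) (hd : ContDiff ℝ 2 d) (hd1 : ∀ x ∈ closure Ω, ‖gradient d x‖ ≤ 1)
    (hdist : ∃ U : Set (EN N), IsOpen U ∧ frontier Ω ⊆ U ∧
      ∀ x ∈ U ∩ closure Ω, d x = Metric.infDist x (frontier Ω))
    (α a A : ℝ) (hα : -1 < α)
    (F : EN N → EN N → Mat N → ℝ) (hF2 : CondF2 Ω α a A F)
    (hF0 : ∀ x ∈ closure Ω, ∀ p : EN N, p ≠ 0 → F x p 0 = 0)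
    (b : EN N → EN N) (hbc : ContinuousOn b Ω) (hb : ∃ M, ∀ x ∈ Ω, ‖b x‖ ≤ M)
    (β : ℝ → ℝ) (hβ : UpperSemicontinuous β)
    (g : EN N → ℝ) (hg : UpperSemicontinuousOn g (closure Ω))
    (v : EN N → ℝ) (hlsc : LowerSemicontinuousOn v (closure Ω))
    (hsup : IsSuperSol Ω F b α (fun _ r' => -(β r')) g (BNeu nv) v)
    (xb : EN N) (hxb : xb ∈ closure Ω)
    (C q k : ℝ) (hC : 0 < C)
    (hq : max 2 ((α + 2) / (α + 1)) < q) (hk : q / (2 * r) < k)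
    (hmin : ∃ δ > (0 : ℝ), ∀ x ∈ closure Ω, x ≠ xb → ‖x - xb‖ < δ →
      v xb < v x + C * ‖x - xb‖ ^ q * Real.exp (-k * d x))
    (hnc : ∀ ε > (0 : ℝ), ∃ x ∈ Metric.ball xb ε ∩ closure Ω,
      ∃ y ∈ Metric.ball xb ε ∩ closure Ω, v x ≠ v y) :
    -(β (v xb)) ≤ g xb := by
  obtain ⟨-, -, -, ρ, hρ⟩ := hΩ
  exact stmt9_general hρ hr hext hd hdist hα hF2 hF0 hb hβ hg hlsc hsup hxb hC
    ((le_max_right _ _).trans_lt hq) hk hmin hnc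
end
end

section
/- Let X, Y ∈ S(N) be real symmetric N×N matrices and ζ > 0 such that, in the Loewner order on real symmetric 2N×2N matrices, −ζ·I_{2N} ≤ blockDiag(X, −Y) ≤ ζ·[[I, −I], [−I, I]] (where blockDiag(X,−Y) is the block-diagonal matrix with blocks X and −Y, and [[I,−I],[−I,I]] is the symmetric block matrix with identity diagonal blocks and −I off-diagonal blocks). Then for every t ∈ [0,1], X − Y ≤ −(1/(2ζ))(tX + (1−t)Y)². -/
open Filter Set Metric
open scoped RealInnerProductSpace Topology NNReal

noncomputable section

/-!
Write `Z = t X + (1 - t) Y`. Compressing the upper bound by the block column `(P, Q)` gives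
`Pᴴ X P - Qᴴ Y Q ≤ ζ (P - Q)ᴴ (P - Q)`. Take `P = 1 + t W` and `Q = 1 - (1 - t) W`: then
`P - Q = W`, and the terms linear in `W` are exactly `Wᴴ Z + Z W`. The lower bounds `X ≥ -ζ` and
`-Y ≥ -ζ` control the remaining quadratic terms at a cost of `(t² + (1 - t)²) ζ Wᴴ W ≤ ζ Wᴴ W`, so
that `X - Y ≤ 2 ζ Wᴴ W - Wᴴ Z - Z W` for every `W`. The right-hand side is minimal at
`W = (2 ζ)⁻¹ Z`, where it equals `-(2 ζ)⁻¹ Z²`.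
-/

section LoewnerOrder

open Matrix

variable {m n R 𝕜 : Type*} [DecidableEq n] [Ring R] [StarRing R] {X Y : Matrix n n R} {ζ t : 𝕜}

theorem isHermitian_of_fromBlocks_add_smul_one [Star 𝕜] [SMul 𝕜 R] [StarModule 𝕜 R]
    (hζ : IsSelfAdjoint ζ)
    (h : (fromBlocks X 0 0 (-Y) + ζ • (1 : Matrix (n ⊕ n) (n ⊕ n) R)).IsHermitian) :
    X.IsHermitian ∧ Y.IsHermitian := by
  have h_blocks : (fromBlocks X 0 0 (-Y)).IsHermitian := by
    simpa only [add_sub_cancel_right] using h.sub (hζ.smul isHermitian_one)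
  obtain ⟨hX, -, -, hY⟩ := isHermitian_fromBlocks_iff.1 h_blocks
  exact ⟨hX, by simpa only [neg_neg] using hY.neg⟩

variable [Fintype n] [PartialOrder R]

theorem posSemidef_compression_of_fromBlocks [Finite m] [CommRing 𝕜] [Algebra 𝕜 R]
    (h : (ζ • fromBlocks (1 : Matrix n n R) (-1) (-1) 1 - fromBlocks X 0 0 (-Y)).PosSemidef)
    (P Q : Matrix n m R) :
    (ζ • ((P - Q)ᴴ * (P - Q)) - (Pᴴ * X * P - Qᴴ * Y * Q)).PosSemidef := by
  convert h.conjTranspose_mul_mul_same (fromRows P Q) using 1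
  rw [sub_eq_add_neg (ζ • fromBlocks _ _ _ _), fromBlocks_smul, fromBlocks_neg, fromBlocks_add,
    conjTranspose_fromRows_eq_fromCols_conjTranspose, fromCols_mul_fromBlocks,
    fromCols_mul_fromRows]
  simp only [conjTranspose_sub, Matrix.mul_sub, Matrix.sub_mul, Matrix.mul_add, Matrix.add_mul,
    Matrix.mul_neg, Matrix.neg_mul, Matrix.mul_smul, Matrix.smul_mul, Matrix.mul_one, neg_neg,
    neg_zero, add_zero, smul_neg, smul_sub]
  abel

variable [CommRing 𝕜] [StarRing 𝕜] [Algebra 𝕜 R] [StarModule 𝕜 R]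

theorem posSemidef_quadratic_expansion_of_fromBlocks (ht : IsSelfAdjoint t)
    (h : (ζ • fromBlocks (1 : Matrix n n R) (-1) (-1) 1 - fromBlocks X 0 0 (-Y)).PosSemidef)
    (W : Matrix n n R) :
    (ζ • (Wᴴ * W) - Wᴴ * (t • X + (1 - t) • Y) - (t • X + (1 - t) • Y) * W
      - Wᴴ * (t ^ 2 • X - (1 - t) ^ 2 • Y) * W - (X - Y)).PosSemidef := by
  have h_star : IsSelfAdjoint (1 - t) := (IsSelfAdjoint.one 𝕜).sub ht
  have h_diff : (1 + t • W) - (1 - (1 - t) • W) = W := by module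
  have h_compressed := posSemidef_compression_of_fromBlocks h (1 + t • W) (1 - (1 - t) • W)
  rw [h_diff] at h_compressed
  convert h_compressed using 1
  simp only [conjTranspose_add, conjTranspose_sub, conjTranspose_smul, conjTranspose_one,
    ht.star_eq, h_star.star_eq, mul_add, add_mul, mul_sub, sub_mul, smul_mul_assoc, mul_smul_comm,
    one_mul, mul_one]
  module

theorem posSemidef_quadratic_bound_of_fromBlocks [PartialOrder 𝕜] [StarOrderedRing 𝕜]
    [StarOrderedRing R] [PosSMulMono 𝕜 R] (hζ : 0 ≤ ζ) (ht : t ∈ Set.Icc 0 1)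
    (h_lower : (fromBlocks X 0 0 (-Y) + ζ • (1 : Matrix (n ⊕ n) (n ⊕ n) R)).PosSemidef)
    (h_upper : (ζ • fromBlocks (1 : Matrix n n R) (-1) (-1) 1 - fromBlocks X 0 0 (-Y)).PosSemidef)
    (W : Matrix n n R) :
    ((2 * ζ) • (Wᴴ * W) - Wᴴ * (t • X + (1 - t) • Y) - (t • X + (1 - t) • Y) * W
      - (X - Y)).PosSemidef := by
  obtain ⟨ht₀, ht₁⟩ := ht
  have h_one_sub : 0 ≤ 1 - t := sub_nonneg.2 ht₁
  rw [← fromBlocks_one, fromBlocks_smul, fromBlocks_add] at h_lower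
  have hX : (X + ζ • 1).PosSemidef := h_lower.submatrix Sum.inl
  have hY : (-Y + ζ • 1).PosSemidef := h_lower.submatrix Sum.inr
  have h_quadratic := posSemidef_quadratic_expansion_of_fromBlocks (.of_nonneg ht₀) h_upper W
  have hXW := (hX.conjTranspose_mul_mul_same W).smul (pow_nonneg ht₀ 2)
  have hYW := (hY.conjTranspose_mul_mul_same W).smul (pow_nonneg h_one_sub 2)
  -- `2 t (1 - t)` is the slack `1 - t² - (1 - t)²`
  have hWW := (posSemidef_conjTranspose_mul_self W).smul
    (mul_nonneg (mul_nonneg zero_le_two (mul_nonneg ht₀ h_one_sub)) hζ)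
  convert ((h_quadratic.add hXW).add hYW).add hWW using 1
  simp only [mul_add, add_mul, mul_sub, sub_mul, mul_neg, neg_mul, smul_mul_assoc,
    mul_smul_comm, mul_one]
  module

end LoewnerOrder

open Matrix in
theorem stmt10_general {n R 𝕜 : Type*} [Fintype n] [DecidableEq n]
    [Ring R] [PartialOrder R] [StarRing R] [StarOrderedRing R]
    [Field 𝕜] [PartialOrder 𝕜] [StarRing 𝕜] [StarOrderedRing 𝕜]
    [Algebra 𝕜 R] [StarModule 𝕜 R] [PosSMulMono 𝕜 R] {X Y : Matrix n n R} {ζ t : 𝕜} (hζ : 0 < ζ)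
    (h_lower : (fromBlocks X 0 0 (-Y) + ζ • (1 : Matrix (n ⊕ n) (n ⊕ n) R)).PosSemidef)
    (h_upper : (ζ • fromBlocks (1 : Matrix n n R) (-1) (-1) 1 - fromBlocks X 0 0 (-Y)).PosSemidef)
    (ht : t ∈ Set.Icc 0 1) :
    (-((2 * ζ)⁻¹ • ((t • X + (1 - t) • Y) * (t • X + (1 - t) • Y))) - (X - Y)).PosSemidef := by
  set Z := t • X + (1 - t) • Y
  have hZ : Z.IsHermitian := by
    obtain ⟨hX, hY⟩ :=
      isHermitian_of_fromBlocks_add_smul_one (.of_nonneg hζ.le) h_lower.isHermitian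
    have h_star : IsSelfAdjoint t := .of_nonneg ht.1
    exact (h_star.smul hX).add (((IsSelfAdjoint.one 𝕜).sub h_star).smul hY)
  have h2ζ : 0 < 2 * ζ := mul_pos two_pos hζ
  have hc : IsSelfAdjoint (2 * ζ)⁻¹ := (IsSelfAdjoint.of_nonneg h2ζ.le).inv₀
  have h_min := posSemidef_quadratic_bound_of_fromBlocks hζ.le ht h_lower h_upper ((2 * ζ)⁻¹ • Z)
  convert h_min using 1
  simp only [conjTranspose_smul, hc.star_eq, hZ.eq, smul_mul_assoc, mul_smul_comm,
    smul_inv_smul₀ h2ζ.ne']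
  module

/-- Lemma of Barles–Ramaswamy, Lemma `barles`: matrix inequalities in the
Loewner order. -/
theorem stmt10 {N : ℕ} (X Y : Mat N) (hX : X.IsSymm) (hY : Y.IsSymm)
    (ζ : ℝ) (hζ : 0 < ζ)
    (h1 : (Matrix.fromBlocks X 0 0 (-Y) +
      ζ • (1 : Matrix (Fin N ⊕ Fin N) (Fin N ⊕ Fin N) ℝ)).PosSemidef)
    (h2 : (ζ • Matrix.fromBlocks (1 : Mat N) (-1) (-1) (1 : Mat N) -
      Matrix.fromBlocks X 0 0 (-Y)).PosSemidef) :
    ∀ t ∈ Set.Icc (0 : ℝ) 1,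
      (-((2 * ζ)⁻¹ • ((t • X + (1 - t) • Y) * (t • X + (1 - t) • Y))) - (X - Y)).PosSemidef :=
  fun _ ht => stmt10_general hζ h1 h2 ht
end
end
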